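/- arXiv:1402.6733 — 3 statements merged into one kernel-verified Lean document; each statement's English description precedes it below -/
import Mathlib

section
/- Let n ≥ 1 and let q = (q_1,...,q_n), a = (a_1,...,a_n), b = (b_1,...,b_n), c = (c_1,...,c_{n+1}) be sequences of indeterminates with each q_i nonzero. Define g̃_{k,ℓ}(t) = t^{-n} · ∏_{i=1}^{n+1}(1 + c_i t) · ∏_{i=1}^{k-1}(1 - b_i t) · ∏_{i=k+1}^{n}(1 + a_i t), and set m_{k,ℓ}(q_ℓ) = g̃_{k,ℓ}(q_ℓ) - g̃_{k,ℓ}(-q_ℓ^{-1}). Then det_{1≤k,ℓ≤n}(m_{k,ℓ}(q_ℓ)) = ∏_{1≤i<j≤n+1}(1 + c_i c_j) · ∏_{1≤i<j≤n}(b_i + a_j) · ∏_{i=1}^{n} q_i^{-n}(1 + q_i^2) · ∏_{1≤i<j≤n}(q_i - q_j)(1 + q_i q_j). -/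
open Finset
open Polynomial

noncomputable def PP {R : Type*} [CommRing R] (n : ℕ) (a b : ℕ → R) (k : ℕ) : R[X] :=
  (∏ i ∈ range k, (1 - C (b i) * X)) * ∏ i ∈ Ico (k+1) n, (1 + C (a i) * X)

lemma PP_succ {R : Type*} [CommRing R] (n : ℕ) (a b : ℕ → R) (k : ℕ) (hk : k < n) :
    PP (n+1) a b (k+1) - PP (n+1) a b k
      = X * (C (-(b k + a (k+1))) * PP n (fun i => a (i+1)) b k) := by
  unfold PP
  rw [prod_range_succ, prod_eq_prod_Ico_succ_bot (by omega : k + 1 < n+1),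
    ← prod_Ico_add' (fun i => 1 + C (a i) * X) (k+1) n 1]
  simp only [map_neg, map_add]
  ring

lemma PP_deg {R : Type*} [CommRing R] (n : ℕ) (a b : ℕ → R) (k : ℕ) (hk : k < n) :
    (PP n a b k).natDegree < n := by
  have h1 : (∏ i ∈ range k, (1 - C (b i) * X)).natDegree ≤ k := by
    refine (natDegree_prod_le _ _).trans ?_
    refine (sum_le_card_nsmul _ _ 1 ?_).trans (by simp)
    intro i _
    compute_degree
  have h2 : (∏ i ∈ Ico (k+1) n, (1 + C (a i) * X)).natDegree ≤ n - (k+1) := by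
    refine (natDegree_prod_le _ _).trans ?_
    refine (sum_le_card_nsmul _ _ 1 ?_).trans (by simp)
    intro i _
    compute_degree
  have := natDegree_mul_le (p := ∏ i ∈ range k, (1 - C (b i) * X)) (q := ∏ i ∈ Ico (k+1) n, (1 + C (a i) * X))
  unfold PP
  omega

lemma det_PP {R : Type*} [CommRing R] (n : ℕ) : ∀ (a b : ℕ → R),
    Matrix.det (Matrix.of fun k i : Fin n => (PP n a b k).coeff i) =
      ∏ i ∈ range n, ∏ j ∈ Ico (i+1) n, (-(b i + a j)) := by
  induction n with
  | zero => intro a b; simp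
  | succ n ih =>
    intro a b
    rw [Matrix.det_eq_of_forall_row_eq_smul_add_pred (B := Matrix.of fun k i : Fin (n+1) =>
      Fin.cases ((PP (n+1) a b 0).coeff i)
        (fun k' : Fin n => (PP (n+1) a b (k'+1) - PP (n+1) a b k').coeff i) k) (fun _ => 1)
      (by intro j; simp) (by intro i j; simp)]
    rw [Matrix.det_succ_column_zero, Fin.sum_univ_succ, Finset.sum_eq_zero]
    · have h0 : (PP (n+1) a b 0).coeff 0 = 1 := by
        simp [PP, coeff_zero_eq_eval_zero, eval_prod]
      simp only [Matrix.of_apply, Fin.cases_zero, Fin.val_zero, h0, pow_zero, one_mul, add_zero]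
      have : (Matrix.submatrix (Matrix.of fun k i : Fin (n+1) =>
        (Fin.cases ((PP (n+1) a b 0).coeff i)
        (fun k' : Fin n => (PP (n+1) a b (k'+1) - PP (n+1) a b k').coeff i) k : R))
          (Fin.succAbove 0) Fin.succ) = Matrix.of fun k i : Fin n => (-(b k + a (k+1))) *
            (Matrix.of fun k i : Fin n => (PP n (fun i => a (i+1)) b k).coeff i) k i := by
        ext k i
        simp only [Matrix.submatrix_apply, Matrix.of_apply, Fin.succAbove_zero, Fin.cases_succ]
        rw [PP_succ n a b k k.2, Fin.val_succ, coeff_X_mul, coeff_C_mul]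
      rw [this, Matrix.det_mul_column, ih, prod_range_succ, Fin.prod_univ_eq_prod_range (fun k => -(b k + a (k+1)))]
      simp only [Ico_self, prod_empty, mul_one]
      rw [← prod_mul_distrib]
      refine prod_congr rfl fun i hi => ?_
      rw [mem_range] at hi
      rw [prod_eq_prod_Ico_succ_bot (by omega : i + 1 < n+1),
        ← prod_Ico_add' (fun j => -(b i + a j)) (i+1) n 1]
    · intro i _
      simp only [Matrix.of_apply, Fin.cases_succ]
      rw [PP_succ n a b i i.2]
      simp

noncomputable def pf (R : Type*) [CommRing R] : ℕ → R[X]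
  | 0 => 1
  | 1 => X
  | (n+2) => X * pf R (n+1) + pf R n

lemma pf_monic (R : Type*) [CommRing R] [Nontrivial R] (n : ℕ) :
    ((pf R n).natDegree = n ∧ (pf R n).Monic) ∧ (pf R (n+1)).natDegree = n+1 ∧ (pf R (n+1)).Monic := by
  induction n with
  | zero => simp [pf, monic_X]
  | succ n ih =>
    obtain ⟨⟨h1, h2⟩, h3, h4⟩ := ih
    refine ⟨⟨h3, h4⟩, ?_⟩
    have hm : (X * pf R (n+1)).Monic := monic_X.mul h4
    have hd : (X * pf R (n+1)).natDegree = n + 2 := by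
      rw [monic_X.natDegree_mul h4, h3]; simp; omega
    have hlt : (pf R n).natDegree < (X * pf R (n+1)).natDegree := by omega
    simp only [pf]
    exact ⟨by rw [natDegree_add_eq_left_of_natDegree_lt hlt, hd],
      hm.add_of_left (degree_lt_degree hlt)⟩

lemma pf_eval {R : Type*} [CommRing R] (t u : R) (h : t * u = -1) (n : ℕ) :
    t^(n+1) - u^(n+1) = (t - u) * (pf R n).eval (t+u) ∧
    t^(n+2) - u^(n+2) = (t - u) * (pf R (n+1)).eval (t+u) := by
  induction n with
  | zero => simp [pf]; ring
  | succ n ih =>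
    obtain ⟨h1, h2⟩ := ih
    refine ⟨h2, ?_⟩
    simp only [pf, eval_add, eval_mul, eval_X]
    rw [mul_add, ← h1, mul_left_comm, ← h2]
    linear_combination (u^(n+1) - t^(n+1)) * h

lemma prod_pairs {K : Type*} [CommMonoid K] {n : ℕ} (q : Fin n → K) :
    ∏ i, ∏ j ∈ univ.filter (fun j => i < j), (q i * q j) = ∏ i, q i ^ (n-1) := by
  simp_rw [prod_mul_distrib]
  have : ∏ i, ∏ j ∈ univ.filter (fun j => i < j), q j = ∏ j, ∏ i ∈ univ.filter (fun i => i < j), q j := by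
    apply prod_comm'; simp
  rw [this, ← prod_mul_distrib]
  refine prod_congr rfl fun i _ => ?_
  rw [prod_const, prod_const, ← pow_add]
  congr 1
  have e1 : univ.filter (fun j => i < j) = Ioi i := by ext; simp
  have e2 : univ.filter (fun j => j < i) = Iio i := by ext; simp
  rw [e1, e2, Fin.card_Ioi, Fin.card_Iio]
  omega

lemma det_H {K : Type*} [Field K] {n : ℕ} (q : Fin n → K) (hq : ∀ i, q i ≠ 0) :
    Matrix.det (Matrix.of fun s l : Fin n => q l ^ (s.val+1) - (-(q l)⁻¹)^(s.val+1)) =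
    (∏ i : Fin n, (q i)⁻¹ ^ n * (1 + q i ^ 2)) *
      (∏ i : Fin n, ∏ j ∈ Finset.univ.filter (fun j => i < j),
        ((q j - q i) * (1 + q i * q j))) := by
  rw [← Matrix.det_transpose]
  have h1 : (Matrix.of fun s l : Fin n => q l ^ (s.val+1) - (-(q l)⁻¹)^(s.val+1)).transpose =
    Matrix.of fun l s : Fin n => (q l + (q l)⁻¹) *
      (Matrix.of fun l s : Fin n => (pf K s).eval (q l - (q l)⁻¹)) l s := by
    ext l s
    simp only [Matrix.transpose_apply, Matrix.of_apply]
    rw [(pf_eval (q l) (-(q l)⁻¹) (by have := hq l; field_simp) s).1]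
    ring_nf
  rw [h1, Matrix.det_mul_column,
    ← Matrix.det_eval_matrixOfPolynomials_eq_det_vandermonde _ (fun s : Fin n => pf K s)
      (fun i => (pf_monic K i).1.1) (fun i => (pf_monic K i).1.2), Matrix.det_vandermonde]
  have h2 : ∀ i j, (q j - (q j)⁻¹) - (q i - (q i)⁻¹) =
      (q i * q j)⁻¹ * ((q j - q i) * (1 + q i * q j)) := by
    intro i j
    have := hq i; have := hq j
    field_simp
    ring
  have h3 : ∀ i : Fin n, Ioi i = univ.filter (fun j => i < j) := by intro i; ext; simp
  simp_rw [h2, h3]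
  simp_rw [prod_mul_distrib (f := fun j => (q _ * q j)⁻¹)]
  rw [prod_mul_distrib (f := fun i => ∏ j ∈ univ.filter (fun j => i < j), (q i * q j)⁻¹)]
  rw [← mul_assoc]
  congr 1
  have h4 := prod_pairs (fun i => (q i)⁻¹)
  simp only [← mul_inv] at h4
  rw [h4, ← prod_mul_distrib]
  refine prod_congr rfl fun i _ => ?_
  have := hq i
  obtain ⟨m, rfl⟩ : ∃ m, n = m + 1 := ⟨n-1, by have := i.2; omega⟩
  simp only [Nat.add_sub_cancel, pow_succ]
  field_simp
  ring

noncomputable def cpol {R : Type*} [CommRing R] {n : ℕ} (c : Fin (n+1) → R) : R[X] :=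
  ∏ i, (1 + C (c i) * X)

lemma cpol_deg {R : Type*} [CommRing R] {n : ℕ} (c : Fin (n+1) → R) :
    (cpol c).natDegree ≤ n+1 := by
  refine (natDegree_prod_le _ _).trans ?_
  refine (sum_le_card_nsmul _ _ 1 ?_).trans (by simp)
  intro i _
  compute_degree

noncomputable def EE {R : Type*} [CommRing R] {n : ℕ} (c : Fin (n+1) → R) : Matrix (Fin n) (Fin n) R :=
  Matrix.of fun i s => (cpol c).coeff (n - i + 1 + s) +
    (-1)^s.val * (if s.val < n - i then (cpol c).coeff (n - i - 1 - s) else 0)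

lemma EE_mul {K : Type*} [Field K] {n : ℕ} (c : Fin (n+1) → K) (t : K) (ht : t ≠ 0) (i : Fin n) :
    ∑ s : Fin n, EE c i s * (t ^ (s.val+1) - (-t⁻¹)^(s.val+1)) =
      t⁻¹^(n - i) * (cpol c).eval t - (-t⁻¹)⁻¹^(n-i) * (cpol c).eval (-t⁻¹) := by
  obtain ⟨d, hd⟩ : ∃ d, n - i = d + 1 := ⟨n-i-1, by have := i.2; omega⟩
  have hdn : d + 1 ≤ n := by omega
  have key : ∀ v : K, v ≠ 0 → v⁻¹^(n-i) * (cpol c).eval v =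
      ∑ s ∈ range n, ((cpol c).coeff (n - i + 1 + s) * v^(s+1) +
        (if s < n - i then (cpol c).coeff (n - i - 1 - s) else 0) * v⁻¹^(s+1)) + (cpol c).coeff (n-i) := by
    intro v hv
    rw [eval_eq_sum_range' (n := d+1+1+n) (by have := cpol_deg c; omega), sum_range_add,
      sum_range_succ, hd, sum_add_distrib, mul_add, mul_add, mul_sum, mul_sum]
    have e1 : ∑ x ∈ range n, v⁻¹^(d+1) * ((cpol c).coeff (d+1+1+x) * v^(d+1+1+x)) =
        ∑ s ∈ range n, (cpol c).coeff (d+1+1+s) * v^(s+1) := by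
      refine sum_congr rfl fun s _ => ?_
      rw [show d+1+1+s = (d+1) + (s+1) by ring, pow_add v (d+1), inv_pow]
      have : v^(d+1) ≠ 0 := pow_ne_zero _ hv
      generalize v^(d+1) = w at *
      field_simp
    have e2 : v⁻¹^(d+1) * ((cpol c).coeff (d+1) * v^(d+1)) = (cpol c).coeff (d+1) := by
      rw [inv_pow]
      have : v^(d+1) ≠ 0 := pow_ne_zero _ hv
      field_simp
    have e3 : ∑ x ∈ range (d+1), v⁻¹^(d+1) * ((cpol c).coeff x * v^x) =
        ∑ s ∈ range n, (if s < d+1 then (cpol c).coeff (d+1-1-s) else 0) * v⁻¹^(s+1) := by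
      simp_rw [ite_mul, zero_mul]
      rw [← sum_filter, show (range n).filter (fun s => s < d+1) = range (d+1) by
        ext; simp; omega, ← sum_range_reflect]
      refine sum_congr rfl fun s hs => ?_
      rw [mem_range] at hs
      have h5 : d + 1 = (s+1) + (d+1-1-s) := by omega
      generalize d+1-1-s = x at *
      rw [h5, pow_add, inv_pow v x]
      have : v^x ≠ 0 := pow_ne_zero _ hv
      field_simp
    rw [e1, e2, e3]
    ring
  rw [key t ht, key (-t⁻¹) (by simpa using ht), add_sub_add_right_eq_sub, ← sum_sub_distrib,
    ← Fin.sum_univ_eq_sum_range (fun s => _)]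
  refine sum_congr rfl fun s _ => ?_
  simp only [EE, Matrix.of_apply]
  have e : (-t⁻¹)⁻¹ = -t := by rw [inv_neg, inv_inv]
  rw [e, neg_pow t⁻¹, neg_pow t, pow_succ (-1:K)]
  generalize (if s.val < n - i then (cpol c).coeff (n - i - 1 - s) else 0) = y
  have h2 : ((-1:K)^s.val)*((-1:K)^s.val) = 1 := by rw [← mul_pow]; simp
  linear_combination (y * t⁻¹^(s.val+1)) * h2

lemma filt_castSucc {R : Type*} [CommMonoid R] {n : ℕ} (i : Fin n) (f : Fin (n+1) → R) :
    ∏ j ∈ univ.filter (fun j => i.castSucc < j), f j =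
      (∏ j ∈ univ.filter (fun j => i < j), f j.castSucc) * f (Fin.last n) := by
  rw [prod_filter, Fin.prod_univ_castSucc, prod_filter]
  simp [Fin.castSucc_lt_last]

lemma W_eq {R : Type*} [CommRing R] {n : ℕ} (c : Fin (n+1) → R) :
    (∏ i : Fin (n + 1), ∏ j ∈ Finset.univ.filter (fun j => i < j), (1 + c i * c j)) =
    (∏ i : Fin n, ∏ j ∈ Finset.univ.filter (fun j => i < j), (1 + c i.castSucc * c j.castSucc)) *
      ∏ i : Fin n, (1 + c i.castSucc * c (Fin.last n)) := by
  rw [Fin.prod_univ_castSucc, ← prod_mul_distrib]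
  simp_rw [filt_castSucc]
  rw [prod_eq_one (s := univ.filter (fun j => Fin.last n < j)), mul_one]
  intro j hj
  simp only [mem_filter, mem_univ, true_and] at hj
  exact absurd hj (not_lt.mpr (Fin.le_last j))

lemma sq_eq {R : Type*} [CommRing R] {n : ℕ} (c : Fin (n+1) → R) :
    ∏ l : Fin n, ∏ r, (1 + c r * c l.castSucc) =
    (∏ i : Fin (n + 1), ∏ j ∈ Finset.univ.filter (fun j => i < j), (1 + c i * c j)) *
     ((∏ l : Fin n, (1 + c l.castSucc ^ 2)) *
      ∏ i : Fin n, ∏ j ∈ Finset.univ.filter (fun j => i < j), (1 + c i.castSucc * c j.castSucc)) := by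
  rw [W_eq]
  have h := prod_prod_Ioi_mul_eq_prod_prod_off_diag
    (fun i j : Fin n => 1 + c i.castSucc * c j.castSucc)
  have h3 : ∀ i : Fin n, Ioi i = univ.filter (fun j => i < j) := by intro i; ext; simp
  simp_rw [h3, prod_mul_distrib] at h
  have h5 : ∀ i j : Fin n, 1 + c j.castSucc * c i.castSucc = 1 + c i.castSucc * c j.castSucc := by
    intro i j; ring
  have h6 : ∀ l : Fin n, ∏ r : Fin n, (1 + c r.castSucc * c l.castSucc) =
      (1 + c l.castSucc ^ 2) * ∏ r ∈ {l}ᶜ, (1 + c r.castSucc * c l.castSucc) := by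
    intro l
    rw [Fintype.prod_eq_mul_prod_compl l, sq]
  simp_rw [Fin.prod_univ_castSucc, h6, prod_mul_distrib]
  rw [← h]
  have h7 : (∏ i : Fin n, ∏ j ∈ Finset.univ.filter (fun j => i < j), (1 + c j.castSucc * c i.castSucc))
    = (∏ i : Fin n, ∏ j ∈ Finset.univ.filter (fun j => i < j), (1 + c i.castSucc * c j.castSucc)) := 
    prod_congr rfl fun i _ => prod_congr rfl fun j _ => h5 i j
  have h8 : ∏ i : Fin n, (1 + c (Fin.last n) * c i.castSucc) =
    ∏ i : Fin n, (1 + c i.castSucc * c (Fin.last n)) := prod_congr rfl fun i _ => by ring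
  rw [h7, h8]
  ring

lemma det_EE_generic {K : Type*} [Field K] {n : ℕ} (c : Fin (n+1) → K) (h0 : ∀ i, c i ≠ 0)
    (hi : Function.Injective c) (h1 : ∀ i j, 1 + c i * c j ≠ 0) :
    (EE c).det = ∏ i : Fin (n + 1), ∏ j ∈ Finset.univ.filter (fun j => i < j), (1 + c i * c j) := by
  have hH := det_H (fun i : Fin n => c i.castSucc) (fun i => h0 _)
  have hm : EE c * (Matrix.of fun s l : Fin n => c l.castSucc ^ (s.val+1) - (-(c l.castSucc)⁻¹)^(s.val+1))
      = (Matrix.of fun l i : Fin n => ((c l.castSucc)⁻¹^n * ∏ r, (1 + c r * c l.castSucc)) *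
          Matrix.vandermonde (fun l : Fin n => c l.castSucc) l i).transpose := by
    ext i l
    rw [Matrix.mul_apply]
    simp only [Matrix.of_apply]
    rw [EE_mul c _ (h0 _)]
    have e1 : (cpol c).eval (-(c l.castSucc)⁻¹) = 0 := by
      rw [cpol, eval_prod]
      apply prod_eq_zero (mem_univ l.castSucc)
      simp [h0]
    have e2 : (cpol c).eval (c l.castSucc) = ∏ r, (1 + c r * c l.castSucc) := by
      simp [cpol, eval_prod]
    rw [e1, e2]
    simp only [Matrix.transpose_apply, Matrix.of_apply, Matrix.vandermonde_apply]
    have h5 : n = (n - i) + i := by have := i.2; omega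
    generalize (∏ r, (1 + c r * c l.castSucc)) = z
    have : (c l.castSucc)⁻¹^n = (c l.castSucc)⁻¹^(n-i) * (c l.castSucc)⁻¹^i.val := by
      rw [← pow_add, ← h5]
    rw [this, inv_pow _ i.val]
    have := h0 l.castSucc
    field_simp
    ring
  have hd := congrArg Matrix.det hm
  rw [Matrix.det_mul, hH, Matrix.det_transpose, Matrix.det_mul_column, Matrix.det_vandermonde] at hd
  have h3 : ∀ i : Fin n, Ioi i = univ.filter (fun j => i < j) := by intro i; ext; simp
  simp_rw [h3, prod_mul_distrib] at hd
  rw [sq_eq] at hd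
  have n1 : ∏ i : Fin n, (c i.castSucc)⁻¹ ^ n ≠ 0 :=
    prod_ne_zero_iff.mpr fun i _ => pow_ne_zero _ (inv_ne_zero (h0 _))
  have n2 : ∏ l : Fin n, (1 + c l.castSucc ^ 2) ≠ 0 :=
    prod_ne_zero_iff.mpr fun i _ => by rw [sq]; exact h1 _ _
  have n3 : ∏ i : Fin n, ∏ j ∈ Finset.univ.filter (fun j => i < j), (1 + c i.castSucc * c j.castSucc) ≠ 0 :=
    prod_ne_zero_iff.mpr fun i _ => prod_ne_zero_iff.mpr fun j _ => h1 _ _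
  have n4 : ∏ i : Fin n, ∏ j ∈ Finset.univ.filter (fun j => i < j), (c j.castSucc - c i.castSucc) ≠ 0 :=
    prod_ne_zero_iff.mpr fun i _ => prod_ne_zero_iff.mpr fun j hj => by
      simp only [mem_filter, mem_univ, true_and] at hj
      rw [sub_ne_zero]
      intro h
      have := Fin.castSucc_injective _ (hi h)
      exact hj.ne' this
  refine mul_right_cancel₀ (mul_ne_zero (mul_ne_zero n1 n2) (mul_ne_zero n4 n3)) ?_
  rw [hd]
  ring

lemma EE_map {R S : Type*} [CommRing R] [CommRing S] (f : R →+* S) {n : ℕ} (c : Fin (n+1) → R) :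
    f.mapMatrix (EE c) = EE (fun i => f (c i)) := by
  have h : cpol (fun i => f (c i)) = (cpol c).map f := by
    simp [cpol, Polynomial.map_prod]
  ext i s
  simp only [EE, h, RingHom.mapMatrix_apply, Matrix.map_apply, Matrix.of_apply, coeff_map]
  split_ifs <;> simp

lemma det_EE {R : Type*} [CommRing R] {n : ℕ} (c : Fin (n+1) → R) :
    (EE c).det = ∏ i : Fin (n + 1), ∏ j ∈ Finset.univ.filter (fun j => i < j), (1 + c i * c j) := by
  have key : (EE (fun i : Fin (n+1) => (MvPolynomial.X i : MvPolynomial (Fin (n+1)) ℤ))).det =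
      ∏ i : Fin (n + 1), ∏ j ∈ Finset.univ.filter (fun j => i < j),
        (1 + MvPolynomial.X i * MvPolynomial.X j) := by
    have hinj := IsFractionRing.injective (MvPolynomial (Fin (n+1)) ℤ)
      (FractionRing (MvPolynomial (Fin (n+1)) ℤ))
    apply hinj
    rw [RingHom.map_det, EE_map, det_EE_generic]
    · simp
    · intro i
      rw [Ne, map_eq_zero_iff _ hinj]
      exact MvPolynomial.X_ne_zero i
    · exact hinj.comp (MvPolynomial.X_injective)
    · intro i j h
      have h' : (1 + MvPolynomial.X i * MvPolynomial.X j : MvPolynomial (Fin (n+1)) ℤ) = 0 := by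
        apply hinj
        simpa using h
      have := congrArg (MvPolynomial.eval (fun _ => (0:ℤ))) h'
      simp at this
  have := congrArg (MvPolynomial.eval₂Hom (Int.castRingHom R) c) key
  rw [RingHom.map_det, EE_map] at this
  simpa using this

theorem det_m_factorisation {K : Type*} [Field K] {n : ℕ} (hn : 1 ≤ n)
    (q a b : Fin n → K) (c : Fin (n + 1) → K) (hq : ∀ i, q i ≠ 0) :
    let g : Fin n → K → K := fun k t =>
      t⁻¹ ^ n * (∏ i : Fin (n + 1), (1 + c i * t)) *
        (∏ i ∈ Finset.univ.filter (fun i => i < k), (1 - b i * t)) *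
        (∏ i ∈ Finset.univ.filter (fun i => k < i), (1 + a i * t))
    Matrix.det (Matrix.of fun k l : Fin n => g k (q l) - g k (-(q l)⁻¹)) =
      (∏ i : Fin (n + 1), ∏ j ∈ Finset.univ.filter (fun j => i < j), (1 + c i * c j)) *
      (∏ i : Fin n, ∏ j ∈ Finset.univ.filter (fun j => i < j), (b i + a j)) *
      (∏ i : Fin n, (q i)⁻¹ ^ n * (1 + q i ^ 2)) *
      (∏ i : Fin n, ∏ j ∈ Finset.univ.filter (fun j => i < j),
        ((q i - q j) * (1 + q i * q j))) := by
  intro g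
  obtain ⟨a', rfl⟩ : ∃ a' : ℕ → K, a = fun i : Fin n => a' i.val :=
    ⟨fun i => if h : i < n then a ⟨i, h⟩ else 0, by ext i; simp⟩
  obtain ⟨b', rfl⟩ : ∃ b' : ℕ → K, b = fun i : Fin n => b' i.val :=
    ⟨fun i => if h : i < n then b ⟨i, h⟩ else 0, by ext i; simp⟩
  have conv1 : ∀ (k : ℕ) (f : ℕ → K), k < n → 
      ∏ i ∈ Finset.univ.filter (fun i : Fin n => i.val < k), f i = ∏ i ∈ range k, f i := by
    intro k f hk
    rw [prod_filter, Fin.prod_univ_eq_prod_range (fun i => if i < k then f i else 1), ← prod_filter]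
    congr 1
    ext; simp; omega
  have conv2 : ∀ (k : ℕ) (f : ℕ → K), 
      ∏ i ∈ Finset.univ.filter (fun i : Fin n => k < i.val), f i = ∏ i ∈ Ico (k+1) n, f i := by
    intro k f
    rw [prod_filter, Fin.prod_univ_eq_prod_range (fun i => if k < i then f i else 1), ← prod_filter]
    congr 1
    ext; simp; omega
  have hg : ∀ k t, t ≠ 0 → g k t =
      ∑ i : Fin n, (PP n a' b' k).coeff i * (t⁻¹^(n - i) * (cpol c).eval t) := by
    intro k t ht
    have e1 : g k t = t⁻¹^n * (cpol c).eval t * (PP n a' b' k).eval t := by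
      simp only [g, cpol, PP, eval_mul, eval_prod, Fin.lt_def]
      rw [conv1 k (fun i => 1 - b' i * t) k.2, conv2 k (fun i => 1 + a' i * t)]
      simp [mul_assoc]
    rw [e1, eval_eq_sum_range' (PP_deg n a' b' k k.2), mul_sum,
      ← Fin.sum_univ_eq_sum_range (fun i => _)]
    refine sum_congr rfl fun i _ => ?_
    have h5 : n = (n - i) + i := by have := i.2; omega
    have : t⁻¹^n = t⁻¹^(n-i) * t⁻¹^i.val := by
      rw [← pow_add, ← h5]
    rw [this, inv_pow _ i.val]
    field_simp
  have hM : (Matrix.of fun k l : Fin n => g k (q l) - g k (-(q l)⁻¹)) =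
      (Matrix.of fun k i : Fin n => (PP n a' b' k).coeff i) * (EE c *
        Matrix.of fun s l : Fin n => q l ^ (s.val+1) - (-(q l)⁻¹)^(s.val+1)) := by
    ext k l
    rw [Matrix.mul_apply]
    simp only [Matrix.mul_apply, Matrix.of_apply]
    simp_rw [EE_mul c _ (hq _)]
    rw [hg _ _ (hq l), hg _ _ (by simpa using hq l), ← sum_sub_distrib]
    exact sum_congr rfl fun i _ => by ring
  rw [hM, Matrix.det_mul, Matrix.det_mul, det_PP, det_EE, det_H q hq]
  have hP : ∏ i ∈ range n, ∏ j ∈ Ico (i+1) n, (-(b' i + a' j)) =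
      ∏ i : Fin n, ∏ j ∈ Finset.univ.filter (fun j => i < j), (-(b' i + a' j)) := by
    rw [← Fin.prod_univ_eq_prod_range (fun i => ∏ j ∈ Ico (i+1) n, (-(b' i + a' j)))]
    exact prod_congr rfl fun i _ => (conv2 i (fun j => -(b' i + a' j))).symm
  have hS : (∏ i : Fin n, ∏ j ∈ Finset.univ.filter (fun j => i < j), (-(b' i + a' j))) *
      (∏ i : Fin n, ∏ j ∈ Finset.univ.filter (fun j => i < j), ((q j - q i) * (1 + q i * q j))) =
      (∏ i : Fin n, ∏ j ∈ Finset.univ.filter (fun j => i < j), (b' i + a' j)) *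
      (∏ i : Fin n, ∏ j ∈ Finset.univ.filter (fun j => i < j), ((q i - q j) * (1 + q i * q j))) := by
    simp only [← prod_mul_distrib]
    exact prod_congr rfl fun i _ => prod_congr rfl fun j _ => by ring
  rw [hP]
  linear_combination ((∏ i : Fin (n + 1), ∏ j ∈ Finset.univ.filter (fun j => i < j), (1 + c i * c j)) *
    (∏ i : Fin n, (q i)⁻¹ ^ n * (1 + q i ^ 2))) * hS
end

section
/- For n ≥ 1 and variables x_1,...,x_n, ∏_{1≤i≤j≤n}(1 + x_i x_j) = Σ_γ s_γ(x_1,...,x_n), where the sum is over all partitions γ which in Frobenius notation (a_1,...,a_r | b_1,...,b_r) satisfy a_i = b_i + 1 for all i. -/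
open Finset

/-- Complete homogeneous symmetric polynomial of degree `r` evaluated at `x`. -/
noncomputable def hpoly {σ : Type*} [Fintype σ] [DecidableEq σ] {R : Type*} [CommRing R]
    (x : σ → R) (r : ℕ) : R :=
  ∑ d ∈ (Finset.univ : Finset (σ → Fin (r + 1))).filter (fun d => ∑ i, (d i : ℕ) = r),
    ∏ i, x i ^ ((d i : ℕ))

/-- `hpoly` with integer index, zero for negative degrees. -/
noncomputable def hpolyZ {σ : Type*} [Fintype σ] [DecidableEq σ] {R : Type*} [CommRing R]
    (x : σ → R) (k : ℤ) : R :=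
  if 0 ≤ k then hpoly x k.toNat else 0

/-- A partition: weakly decreasing, eventually zero sequence of naturals (0-indexed parts,
so `parts 0` is the first part). -/
structure Partn where
  parts : ℕ → ℕ
  antitone' : Antitone parts
  eventually_zero : ∃ N, ∀ i, N ≤ i → parts i = 0

/-- The conjugate partition: `conj p j` is the number of parts exceeding `j`
(the length of column `j+1`). -/
noncomputable def Partn.conj (p : Partn) (j : ℕ) : ℕ :=
  Nat.card {i : ℕ | j < p.parts i}

/-- Number of nonzero parts. -/
noncomputable def Partn.len (p : Partn) : ℕ :=
  Nat.card {i : ℕ | 0 < p.parts i}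

/-- Membership in `𝒫₁ = 𝒞`: in Frobenius notation every arm length exceeds the
corresponding leg length by exactly 1 (armᵢ = partsᵢ - i - 1, legᵢ = conjᵢ - i - 1,
0-indexed along the diagonal `i < parts i`). -/
def Partn.InC (p : Partn) : Prop :=
  ∀ i, i < p.parts i → p.parts i = p.conj i + 1

/-- Membership in `𝒫₋₁ = 𝒜` (conjugates of `𝒫₁`): every leg length exceeds the
corresponding arm length by exactly 1. -/
def Partn.InA (p : Partn) : Prop :=
  ∀ i, i < p.parts i → p.conj i = p.parts i + 1

/-- Schur polynomial in `n` variables via the Jacobi–Trudi determinant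
`s_p = det(h_{p_i - i + j})_{1 ≤ i,j ≤ ℓ(p)}`; this vanishes when `ℓ(p) > n`. -/
noncomputable def schur {n : ℕ} {R : Type*} [CommRing R] (x : Fin n → R) (p : Partn) : R :=
  Matrix.det (Matrix.of fun i j : Fin p.len =>
    hpolyZ x ((p.parts i : ℤ) - (i : ℕ) + (j : ℕ)))

/-- Skew Schur polynomial `s_{lam/mu}` in `n` variables via the Jacobi–Trudi determinant
`det(h_{lam_i - mu_j - i + j})`; this vanishes unless `mu ⊆ lam`. -/
noncomputable def skewSchur {n : ℕ} {R : Type*} [CommRing R] (x : Fin n → R)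
    (lam mu : Partn) : R :=
  Matrix.det (Matrix.of fun i j : Fin (max lam.len mu.len) =>
    hpolyZ x ((lam.parts i : ℤ) - (mu.parts j : ℕ) - (i : ℕ) + (j : ℕ)))


theorem Partn.ext_parts {p q : Partn} (h : ∀ i, p.parts i = q.parts i) : p = q := by
  cases p; cases q
  simp only [Partn.mk.injEq]
  funext i; exact h i

theorem Partn.lt_conj_iff (p : Partn) (i j : ℕ) : i < p.conj j ↔ j < p.parts i := by
  classical
  have hex : ∃ m, p.parts m ≤ j := by
    obtain ⟨N, hN⟩ := p.eventually_zero
    exact ⟨N, by rw [hN N le_rfl]; exact Nat.zero_le _⟩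
  have hset : {i : ℕ | j < p.parts i} = Set.Iio (Nat.find hex) := by
    ext k
    simp only [Set.mem_ofPred_eq, Set.mem_Iio, Nat.lt_find_iff, not_le]
    constructor
    · intro h m hm
      exact lt_of_lt_of_le h (p.antitone' hm)
    · intro h; exact h k le_rfl
  have hc : p.conj j = Nat.find hex := by
    unfold Partn.conj
    rw [hset]
    simp
  rw [hc]
  have : i ∈ {i : ℕ | j < p.parts i} ↔ i ∈ Set.Iio (Nat.find hex) := by rw [hset]
  simpa using this.symm

theorem Partn.len_eq_conj (p : Partn) : p.len = p.conj 0 := rfl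

theorem Partn.lt_len_iff (p : Partn) (i : ℕ) : i < p.len ↔ 0 < p.parts i :=
  p.lt_conj_iff i 0

theorem Partn.len_le_iff (p : Partn) (N : ℕ) : p.len ≤ N ↔ p.parts N = 0 := by
  have := p.lt_len_iff N
  omega

/-- Add an outer hook with leg `N` and arm `N + 1`. -/
def Partn.hook (N : ℕ) (p : Partn) : Partn where
  parts i := match i with
    | 0 => max (N + 2) (p.parts 0 + 1)
    | i + 1 => if i < N then p.parts i + 1 else 0
  antitone' := by
    apply antitone_nat_of_succ_le
    intro i
    cases i with
    | zero =>
      simp only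
      split_ifs <;> omega
    | succ i =>
      have := p.antitone' (Nat.le_succ i)
      simp only [Nat.succ_eq_add_one] at this ⊢
      split_ifs <;> omega
  eventually_zero := ⟨N + 1, by
    intro i hi
    cases i with
    | zero => omega
    | succ i => simp only; rw [if_neg (by omega)]⟩

theorem Partn.hook_zero (N : ℕ) (p : Partn) :
    (p.hook N).parts 0 = max (N + 2) (p.parts 0 + 1) := rfl

theorem Partn.hook_succ (N : ℕ) (p : Partn) (i : ℕ) :
    (p.hook N).parts (i + 1) = if i < N then p.parts i + 1 else 0 := rfl

theorem Partn.hook_len (N : ℕ) (p : Partn) : (p.hook N).len = N + 1 := by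
  apply le_antisymm
  · rw [Partn.len_le_iff, Partn.hook_succ, if_neg (lt_irrefl _)]
  · rw [Nat.succ_le_iff, Partn.lt_len_iff]
    cases N with
    | zero => rw [Partn.hook_zero]; omega
    | succ N => rw [Partn.hook_succ, if_pos (by omega)]; omega

theorem Partn.hook_conj (N : ℕ) (p : Partn) (hp : p.len ≤ N) (j : ℕ) (hj : j ≤ N) :
    (p.hook N).conj (j + 1) = p.conj j + 1 := by
  apply eq_of_forall_lt_iff
  intro i
  rw [Partn.lt_conj_iff]
  cases i with
  | zero => rw [Partn.hook_zero]; omega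
  | succ i =>
    rw [Partn.hook_succ, Nat.add_lt_add_iff_right, Partn.lt_conj_iff]
    split_ifs with h
    · omega
    · have h1 := (p.len_le_iff N).1 hp
      have h2 := p.antitone' (not_lt.1 h)
      omega

theorem Partn.InC.parts_zero_le {p : Partn} (h : p.InC) : p.parts 0 ≤ p.len + 1 := by
  rcases Nat.eq_zero_or_pos (p.parts 0) with h0 | h0
  · omega
  · have := h 0 h0
    rw [Partn.len_eq_conj]; omega

theorem Partn.hook_inC {N : ℕ} {p : Partn} (hp : p.len ≤ N) (h : p.InC) : (p.hook N).InC := by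
  intro i hi
  have h0 := h.parts_zero_le
  cases i with
  | zero =>
    rw [← Partn.len_eq_conj, Partn.hook_len, Partn.hook_zero]; omega
  | succ i =>
    rw [Partn.hook_succ] at hi ⊢
    split_ifs at hi ⊢ with hN
    · rw [Partn.hook_conj N p hp i hN.le, h i (by omega)]
    · omega

/-- Remove the outer hook. -/
def Partn.unhook (p : Partn) : Partn where
  parts i := p.parts (i + 1) - 1
  antitone' := by
    intro i j hij
    have := p.antitone' (Nat.succ_le_succ hij)
    simp only [Nat.succ_eq_add_one] at this ⊢
    omega
  eventually_zero := by
    obtain ⟨N, hN⟩ := p.eventually_zero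
    exact ⟨N, fun i hi => by rw [hN (i + 1) (by omega)]⟩

theorem Partn.unhook_len {p : Partn} {N : ℕ} (hl : p.len = N + 1) : p.unhook.len ≤ N := by
  rw [Partn.len_le_iff]
  have := (p.len_le_iff (N + 1)).1 hl.le
  change p.parts (N + 1) - 1 = 0
  omega

theorem Partn.hook_unhook {p : Partn} {N : ℕ} (hl : p.len = N + 1) (h : p.InC) :
    p.unhook.hook N = p := by
  apply Partn.ext_parts
  intro i
  cases i with
  | zero =>
    rw [Partn.hook_zero]
    change max _ (p.parts 1 - 1 + 1) = _
    have h1 := p.antitone' (Nat.zero_le 1)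
    have h2 : 0 < p.parts 0 := (p.lt_len_iff 0).1 (by omega)
    have h3 := h 0 h2
    rw [← Partn.len_eq_conj] at h3
    omega
  | succ i =>
    rw [Partn.hook_succ]
    change (if i < N then p.parts (i + 1) - 1 + 1 else 0) = _
    have := p.lt_len_iff (i + 1)
    split_ifs <;> omega

theorem Partn.unhook_inC {p : Partn} {N : ℕ} (hl : p.len = N + 1) (h : p.InC) :
    p.unhook.InC := by
  intro i hi
  have h1 : p.unhook.parts i = p.parts (i + 1) - 1 := rfl
  have h2 := h (i + 1) (by omega)
  have h3 := p.lt_len_iff (i + 1)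
  have h4 := Partn.hook_conj N p.unhook (Partn.unhook_len hl) i (by omega)
  rw [Partn.hook_unhook hl h] at h4
  omega

/-- The empty partition. -/
def Partn.empty : Partn where
  parts _ := 0
  antitone' := fun _ _ _ => le_rfl
  eventually_zero := ⟨0, fun _ _ => rfl⟩

open Classical in
/-- The finite set of partitions in the class with at most `N` rows. -/
noncomputable def Tset : ℕ → Finset Partn
  | 0 => {Partn.empty}
  | N + 1 => Tset N ∪ (Tset N).image (Partn.hook N)

theorem mem_Tset (N : ℕ) (p : Partn) : p ∈ Tset N ↔ p.InC ∧ p.len ≤ N := by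
  induction N generalizing p with
  | zero =>
    simp only [Tset, Finset.mem_singleton]
    constructor
    · rintro rfl
      refine ⟨fun i hi => absurd hi (Nat.not_lt_zero _), ?_⟩
      rw [Partn.len_le_iff]; rfl
    · rintro ⟨-, h⟩
      rw [Partn.len_le_iff] at h
      apply Partn.ext_parts
      intro i
      have := p.antitone' (Nat.zero_le i)
      change _ = 0
      omega
  | succ N ih =>
    simp only [Tset, Finset.mem_union, Finset.mem_image]
    constructor
    · rintro (h | ⟨q, hq, rfl⟩)
      · rw [ih] at h; exact ⟨h.1, by omega⟩
      · rw [ih] at hq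
        exact ⟨Partn.hook_inC hq.2 hq.1, by rw [Partn.hook_len]⟩
    · rintro ⟨h, hl⟩
      rcases Nat.lt_or_ge N p.len with h' | h'
      · have hl' : p.len = N + 1 := by omega
        exact Or.inr ⟨p.unhook, (ih _).2 ⟨Partn.unhook_inC hl' h, Partn.unhook_len hl'⟩,
          Partn.hook_unhook hl' h⟩
      · exact Or.inl ((ih _).2 ⟨h, h'⟩)

theorem hook_injOn (N : ℕ) : Set.InjOn (Partn.hook N) (Tset N : Set Partn) := by
  intro p hp q hq hpq
  rw [Finset.mem_coe, mem_Tset, Partn.len_le_iff] at hp hq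
  apply Partn.ext_parts
  intro i
  rcases Nat.lt_or_ge i N with h | h
  · have := congrArg (fun r => Partn.parts r (i + 1)) hpq
    simp only [Partn.hook_succ, if_pos h] at this
    omega
  · have h1 := p.antitone' h
    have h2 := q.antitone' h
    omega

theorem sum_Tset_succ {M : Type*} [AddCommMonoid M] (N : ℕ) (f : Partn → M) :
    ∑ p ∈ Tset (N + 1), f p = ∑ p ∈ Tset N, f p + ∑ p ∈ Tset N, f (p.hook N) := by
  classical
  rw [Tset, Finset.sum_union, Finset.sum_image (hook_injOn N)]
  rw [Finset.disjoint_left]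
  intro p hp hp'
  rw [mem_Tset] at hp
  rw [Finset.mem_image] at hp'
  obtain ⟨q, -, rfl⟩ := hp'
  have := Partn.hook_len N q
  omega

theorem alt_sum {R V : Type*} [CommRing R] [AddCommGroup V] [Module R V] (r : ℤ → V) (N : ℕ)
    (A : V [⋀^Fin N]→ₗ[R] R) :
    ∑ p ∈ Tset N, A (fun i => r ((p.parts i : ℤ) - (i : ℕ))) =
      A (fun j => r (-((j : ℕ) : ℤ)) + (-1 : R) ^ (j : ℕ) • r ((j : ℕ) + 2)) := by
  induction N with
  | zero =>
    simp only [Tset, Finset.sum_singleton]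
    congr 1
    funext i; exact i.elim0
  | succ N ih =>
    have key : ∀ (g : Fin N → V) (v : V),
        A (Fin.snoc (α := fun _ => V) g v) = (-1 : R) ^ N * A.curryLeft v g := by
      intro g v
      rw [Fin.snoc_eq_cons_rotate]
      have := A.map_perm (Fin.cons (α := fun _ => V) v g) (finRotate (N + 1))
      rw [Function.comp_def] at this
      rw [this, sign_finRotate]
      simp [Units.smul_def, AlternatingMap.curryLeft_apply_apply, Matrix.vecCons]
    have hR : (fun j : Fin (N + 1) =>
        r (-((j : ℕ) : ℤ)) + (-1 : R) ^ (j : ℕ) • r ((j : ℕ) + 2)) =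
        Fin.snoc (α := fun _ => V)
          (fun j : Fin N => r (-((j : ℕ) : ℤ)) + (-1 : R) ^ (j : ℕ) • r ((j : ℕ) + 2))
          (r (-(N : ℤ)) + (-1 : R) ^ N • r (N + 2)) := by
      funext j
      refine Fin.lastCases ?_ (fun j => ?_) j <;> simp
    rw [hR, key, sum_Tset_succ, map_add, AlternatingMap.add_apply, map_smul,
      AlternatingMap.smul_apply, ← ih, ← ih, mul_add, smul_eq_mul, ← mul_assoc, ← pow_add,
      Even.neg_one_pow ⟨N, rfl⟩, one_mul]
    congr 1
    · rw [Finset.mul_sum]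
      apply Finset.sum_congr rfl
      intro p hp
      rw [← key]
      congr 1
      funext j
      rw [mem_Tset, Partn.len_le_iff] at hp
      refine Fin.lastCases ?_ (fun j => ?_) j <;> simp [hp.2]
    · apply Finset.sum_congr rfl
      intro p hp
      rw [AlternatingMap.curryLeft_apply_apply]
      congr 1
      rw [mem_Tset] at hp
      have := hp.1.parts_zero_le
      funext j
      refine Fin.cases ?_ (fun j => ?_) j
      · simp only [Fin.val_zero, Partn.hook_zero, Matrix.cons_val_zero]
        congr 1
        rw [max_eq_left (by omega)]
        push_cast; ring
      · simp only [Fin.val_succ, Partn.hook_succ, if_pos j.2, Matrix.cons_val_succ]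
        congr 1
        push_cast; ring

/-- Generating series of the complete homogeneous symmetric polynomials. -/
noncomputable def Hser {n : ℕ} {R : Type*} [CommRing R] (x : Fin n → R) : PowerSeries R :=
  PowerSeries.mk (hpoly x)

theorem Hser_eq {n : ℕ} {R : Type*} [CommRing R] (x : Fin n → R) :
    Hser x = ∏ i, PowerSeries.mk (fun d => x i ^ d) := by
  ext r
  rw [PowerSeries.coeff_prod, Hser, PowerSeries.coeff_mk, hpoly]
  simp only [PowerSeries.coeff_mk]
  refine Finset.sum_bij' (fun d _ => Finsupp.equivFunOnFinite.symm (fun i => (d i : ℕ)))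
    (fun l _ => fun i => Fin.ofNat (r + 1) (l i)) ?_ ?_ ?_ ?_ ?_
  · intro d hd
    simp only [Finset.mem_filter, Finset.mem_univ, true_and] at hd
    simp [Finset.mem_finsuppAntidiag, hd]
  · intro l hl
    simp only [Finset.mem_finsuppAntidiag] at hl
    simp only [Finset.mem_filter, Finset.mem_univ, true_and]
    rw [← hl.1]
    apply Finset.sum_congr rfl
    intro i _
    have : l i ≤ r := by
      rw [← hl.1]; exact Finset.single_le_sum (fun _ _ => Nat.zero_le _) (Finset.mem_univ i)
    simp only [Fin.val_ofNat]
    rw [hl.1]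
    exact Nat.mod_eq_of_lt (by omega)
  · intro d hd
    funext i
    simp
  · intro l hl
    simp only [Finset.mem_finsuppAntidiag] at hl
    ext i
    have : l i ≤ r := by
      rw [← hl.1]; exact Finset.single_le_sum (fun _ _ => Nat.zero_le _) (Finset.mem_univ i)
    simp
    omega
  · intro d hd
    simp

/-- The linear factor `1 - a t`. -/
noncomputable def lfac {R : Type*} [CommRing R] (a : R) : Polynomial R :=
  1 - Polynomial.C a * Polynomial.X

theorem lfac_deg {R : Type*} [CommRing R] (a : R) : (lfac a).natDegree ≤ 1 := by
  unfold lfac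
  compute_degree

theorem lfac_mul {R : Type*} [CommRing R] (a : R) :
    PowerSeries.mk (fun d => a ^ d) * (lfac a : PowerSeries R) = 1 := by
  ext m
  simp only [lfac, Polynomial.coe_sub, Polynomial.coe_one, Polynomial.coe_mul, Polynomial.coe_C,
    Polynomial.coe_X, mul_sub, mul_one]
  rw [mul_comm (PowerSeries.C a), ← mul_assoc]
  cases m with
  | zero => simp
  | succ m =>
    rw [map_sub, PowerSeries.coeff_mul_C, PowerSeries.coeff_succ_mul_X]
    simp [pow_succ, PowerSeries.coeff_one]

theorem Hser_mul_all {n : ℕ} {R : Type*} [CommRing R] (x : Fin n → R) :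
    Hser x * ((∏ i, lfac (x i) : Polynomial R) : PowerSeries R) = 1 := by
  rw [Hser_eq, ← Polynomial.coeToPowerSeries.ringHom_apply, map_prod, ← Finset.prod_mul_distrib]
  simp only [Polynomial.coeToPowerSeries.ringHom_apply, lfac_mul]
  simp

theorem Hser_mul_erase {n : ℕ} {R : Type*} [CommRing R] (x : Fin n → R) (j : Fin n) :
    Hser x * ((∏ i ∈ Finset.univ.erase j, lfac (x i) : Polynomial R) : PowerSeries R) =
      PowerSeries.mk (fun d => x j ^ d) := by
  rw [Hser_eq, ← Polynomial.coeToPowerSeries.ringHom_apply, map_prod,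
    ← Finset.mul_prod_erase _ _ (Finset.mem_univ j), mul_assoc, ← Finset.prod_mul_distrib]
  simp only [Polynomial.coeToPowerSeries.ringHom_apply, lfac_mul]
  simp

theorem coeff_Hser_mul {n : ℕ} {R : Type*} [CommRing R] (x : Fin n → R) (P : Polynomial R)
    (N : ℕ) (hP : P.natDegree < N) (m : ℕ) :
    PowerSeries.coeff m (Hser x * (P : PowerSeries R)) =
      ∑ b ∈ Finset.range N, hpolyZ x ((m : ℤ) - b) * P.coeff b := by
  rw [mul_comm, PowerSeries.coeff_mul,
    Finset.Nat.sum_antidiagonal_eq_sum_range_succ_mk]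
  have h1 : ∑ b ∈ Finset.range N, hpolyZ x ((m : ℤ) - b) * P.coeff b =
      ∑ b ∈ Finset.range (m + 1 + N), hpolyZ x ((m : ℤ) - b) * P.coeff b := by
    apply Finset.sum_subset
    · intro b; simp only [Finset.mem_range]; omega
    · intro b _ hb
      rw [Finset.mem_range] at hb
      rw [Polynomial.coeff_eq_zero_of_natDegree_lt (by omega), mul_zero]
  have h2 : ∑ b ∈ Finset.range (m + 1), hpolyZ x ((m : ℤ) - b) * P.coeff b =
      ∑ b ∈ Finset.range (m + 1 + N), hpolyZ x ((m : ℤ) - b) * P.coeff b := by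
    apply Finset.sum_subset
    · intro b; simp only [Finset.mem_range]; omega
    · intro b _ hb
      rw [Finset.mem_range] at hb
      rw [hpolyZ, if_neg (by omega), zero_mul]
  rw [h1, ← h2]
  apply Finset.sum_congr rfl
  intro b hb
  rw [Finset.mem_range] at hb
  rw [hpolyZ, if_pos (by omega), mul_comm]
  have : ((m : ℤ) - b).toNat = m - b := by omega
  simp [this, Hser]

theorem hpolyZ_zero {n : ℕ} {R : Type*} [CommRing R] (x : Fin n → R) : hpolyZ x 0 = 1 := by
  have := coeff_Hser_mul x 1 1 (by simp) 0
  simp at this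
  rw [← this, Hser_eq]
  simp [map_prod]

theorem hpolyZ_neg {n : ℕ} {R : Type*} [CommRing R] (x : Fin n → R) {k : ℤ} (hk : k < 0) :
    hpolyZ x k = 0 := by
  rw [hpolyZ, if_neg (by omega)]

/-- The matrix linking complete homogeneous polynomials and powers. -/
noncomputable def Mmat {n : ℕ} {R : Type*} [CommRing R] (x : Fin n → R) :
    Matrix (Fin n) (Fin n) R :=
  Matrix.of fun k j => (∏ i ∈ Finset.univ.erase j, lfac (x i)).coeff (n - 1 - k)

theorem pow_eq_sum {n : ℕ} {R : Type*} [CommRing R] (x : Fin n → R) (m : ℕ) (j : Fin n) :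
    x j ^ m = ∑ k : Fin n, hpolyZ x ((m : ℤ) - (n - 1) + (k : ℕ)) * Mmat x k j := by
  have hn : 0 < n := j.pos
  have hd : (∏ i ∈ Finset.univ.erase j, lfac (x i)).natDegree < n := by
    refine lt_of_le_of_lt (Polynomial.natDegree_prod_le _ _) ?_
    refine lt_of_le_of_lt (Finset.sum_le_sum (fun i _ => lfac_deg (x i))) ?_
    simp [Finset.card_erase_of_mem]
    omega
  have h := coeff_Hser_mul x _ n hd m
  rw [Hser_mul_erase, PowerSeries.coeff_mk] at h
  rw [h, ← Fin.sum_univ_eq_sum_range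
    (fun b => hpolyZ x ((m : ℤ) - b) * (∏ i ∈ Finset.univ.erase j, lfac (x i)).coeff b),
    ← Equiv.sum_comp Fin.revPerm]
  apply Finset.sum_congr rfl
  intro k _
  have hk := k.2
  simp only [Mmat, Matrix.of_apply, Fin.revPerm_apply, Fin.val_rev]
  congr 2
  · omega
  · omega

theorem schur_eq_zero {n : ℕ} {R : Type*} [CommRing R] (x : Fin n → R) (p : Partn)
    (hp : n < p.len) : schur x p = 0 := by
  unfold schur
  set A : Matrix (Fin p.len) (Fin p.len) R := Matrix.of fun i j : Fin p.len =>
    hpolyZ x ((p.parts i : ℤ) - (i : ℕ) + (j : ℕ)) with hA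
  set P : Polynomial R := ∏ i, lfac (x i) with hP
  let v : Fin p.len → R := fun j => P.coeff (p.len - 1 - j)
  have hd : P.natDegree < p.len := by
    refine lt_of_le_of_lt (Polynomial.natDegree_prod_le _ _) ?_
    refine lt_of_le_of_lt (Finset.sum_le_sum (fun i _ => lfac_deg (x i))) ?_
    simpa using hp
  have hv : A.mulVec v = 0 := by
    funext i
    have hi := i.2
    have hpos := (p.lt_len_iff i).1 hi
    obtain ⟨m, hm⟩ : ∃ m : ℕ, (m : ℤ) + 1 = (p.parts i : ℤ) - (i : ℕ) + (p.len - 1) :=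
      ⟨p.parts i + (p.len - 1 - i) - 1, by omega⟩
    have h := coeff_Hser_mul x P p.len hd (m + 1)
    rw [hP, Hser_mul_all, ← hP, PowerSeries.coeff_one, if_neg (by omega)] at h
    rw [← Fin.sum_univ_eq_sum_range
      (fun b => hpolyZ x (((m + 1 : ℕ) : ℤ) - b) * P.coeff b),
      ← Equiv.sum_comp Fin.revPerm] at h
    rw [Pi.zero_apply, h]
    change ∑ k, A i k * v k = _
    apply Finset.sum_congr rfl
    intro k _
    have hk := k.2
    simp only [hA, v, Matrix.of_apply, Fin.revPerm_apply, Fin.val_rev]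
    congr 2
    · omega
    · omega
  have h1 : A.adjugate.mulVec (A.mulVec v) = A.det • v := by
    rw [Matrix.mulVec_mulVec, Matrix.adjugate_mul, Matrix.smul_mulVec, Matrix.one_mulVec]
  rw [hv, Matrix.mulVec_zero] at h1
  have h2 := congrFun h1 ⟨p.len - 1, by omega⟩
  have h3 : P.coeff 0 = 1 := by
    rw [hP, Polynomial.coeff_zero_prod]
    simp [lfac]
  simpa [v, h3] using h2.symm

theorem schur_eq_det {n : ℕ} {R : Type*} [CommRing R] (x : Fin n → R) (p : Partn) (N : ℕ)
    (hp : p.len ≤ N) : schur x p = Matrix.det (Matrix.of fun i j : Fin N =>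
      hpolyZ x ((p.parts i : ℤ) - (i : ℕ) + (j : ℕ))) := by
  induction N, hp using Nat.le_induction with
  | base => rfl
  | succ N hN ih =>
    rw [ih, Matrix.det_succ_row _ (Fin.last N), Finset.sum_eq_single (Fin.last N)]
    · rw [Partn.len_le_iff] at hN
      simp only [Matrix.of_apply, Fin.val_last, hN]
      rw [show ((0 : ℕ) : ℤ) - (N : ℤ) + (N : ℤ) = 0 by simp, hpolyZ_zero,
        Even.neg_one_pow ⟨N, rfl⟩, one_mul, one_mul]
      congr 1
      ext i j
      simp
    · intro j _ hj
      rw [Partn.len_le_iff] at hN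
      have hj' : (j : ℕ) < N := Fin.val_lt_last hj
      simp only [Matrix.of_apply, Fin.val_last, hN]
      rw [hpolyZ_neg x (by omega)]
      simp
    · simp

/-- The matrix whose determinant is the sum of Schur polynomials. -/
noncomputable def Hsum {n : ℕ} {R : Type*} [CommRing R] (x : Fin n → R) :
    Matrix (Fin n) (Fin n) R :=
  Matrix.of fun j k => hpolyZ x (-((j : ℕ) : ℤ) + (k : ℕ)) +
    (-1 : R) ^ (j : ℕ) * hpolyZ x ((j : ℕ) + 2 + (k : ℕ))

theorem rhs_eq_det {n : ℕ} {R : Type*} [CommRing R] (x : Fin n → R) :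
    ∑ᶠ (γ : Partn) (_ : γ.InC), schur x γ = (Hsum x).det := by
  have h1 : ∑ᶠ (γ : Partn) (_ : γ.InC), schur x γ = ∑ γ ∈ Tset n, schur x γ := by
    apply finsum_cond_eq_sum_of_cond_iff
    intro p hp
    rw [mem_Tset]
    constructor
    · intro h
      refine ⟨h, ?_⟩
      by_contra hlt
      exact hp (schur_eq_zero x p (by omega))
    · exact fun h => h.1
  rw [h1]
  have h2 := alt_sum (R := R) (V := Fin n → R) (fun m k => hpolyZ x (m + (k : ℕ))) n
    Matrix.detRowAlternating
  refine Eq.trans ?_ (h2.trans ?_)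
  · apply Finset.sum_congr rfl
    intro p hp
    rw [mem_Tset] at hp
    rw [schur_eq_det x p n hp.2]
    rfl
  · rfl

theorem Hsum_mul_Mmat {n : ℕ} {R : Type*} [CommRing R] (x : Fin n → R) :
    Hsum x * Mmat x = Matrix.of fun j i : Fin n =>
      x i ^ (n - 1 - (j : ℕ)) + (-1 : R) ^ (j : ℕ) * x i ^ (n + 1 + (j : ℕ)) := by
  ext j i
  have hj := j.2
  rw [Matrix.mul_apply, Matrix.of_apply, pow_eq_sum x, pow_eq_sum x (n + 1 + (j : ℕ)),
    Finset.mul_sum, ← Finset.sum_add_distrib]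
  apply Finset.sum_congr rfl
  intro k _
  simp only [Hsum, Matrix.of_apply, add_mul, mul_assoc]
  congr 3
  · congr 1; omega
  · congr 1; push_cast; ring

theorem det_Mmat {n : ℕ} {R : Type*} [CommRing R] (x : Fin n → R) :
    (Mmat x).det = ∏ i : Fin n, ∏ j ∈ Finset.Ioi i, (x i - x j) := by
  set U : Matrix (Fin n) (Fin n) R :=
    Matrix.of fun j k => hpolyZ x (-((j : ℕ) : ℤ) + (k : ℕ)) with hU
  have h1 : U * Mmat x = (Matrix.projVandermonde 1 x).transpose := by
    ext j i
    have hj := j.2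
    rw [Matrix.mul_apply, Matrix.transpose_apply, Matrix.projVandermonde_apply, Pi.one_apply,
      one_pow, one_mul, Fin.val_rev, pow_eq_sum x]
    apply Finset.sum_congr rfl
    intro k _
    simp only [hU, Matrix.of_apply]
    congr 2
    omega
  have h2 : U.det = 1 := by
    rw [Matrix.det_of_isUpperTriangular]
    · simp [hU, hpolyZ_zero]
    · intro i j hij
      simp only [hU, Matrix.of_apply]
      apply hpolyZ_neg
      have : (j : ℕ) < i := hij
      omega
  have h3 := congrArg Matrix.det h1
  rw [Matrix.det_mul, h2, one_mul, Matrix.det_transpose, Matrix.det_projVandermonde] at h3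
  simpa using h3

/-- Coefficients for the symplectic denominator identity. -/
def cco : ℕ → ℕ → ℕ
  | 0, 0 => 1
  | 0, _ + 1 => 0
  | 1, 0 => 0
  | 1, 1 => 1
  | 1, _ + 2 => 0
  | j + 2, 0 => cco j 0
  | j + 2, k + 1 => cco (j + 1) k + cco j (k + 1)

theorem cco_gt (j : ℕ) : ∀ k, j < k → cco j k = 0 := by
  induction j using Nat.strong_induction_on with
  | _ j ih =>
    intro k hk
    match j, k with
    | 0, 0 => omega
    | 0, k + 1 => simp [cco]
    | 1, 0 => omega
    | 1, 1 => omega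
    | 1, k + 2 => simp [cco]
    | j + 2, 0 => omega
    | j + 2, k + 1 =>
      rw [cco, ih (j + 1) (by omega) k (by omega), ih j (by omega) (k + 1) (by omega)]

theorem cco_diag (j : ℕ) : cco j j = 1 := by
  induction j using Nat.strong_induction_on with
  | _ j ih =>
    match j with
    | 0 => simp [cco]
    | 1 => simp [cco]
    | j + 2 => rw [cco, ih (j + 1) (by omega), cco_gt j _ (by omega)]

theorem cco_sum {R : Type*} [CommRing R] (y : R) (j : ℕ) : ∀ s,
    y ^ s * (1 - (-y ^ 2) ^ (j + 1)) = (1 + y ^ 2) *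
      ∑ k ∈ Finset.range (j + 1), (cco j k : R) * ((1 - y ^ 2) ^ k * y ^ (s + j - k)) := by
  induction j using Nat.strong_induction_on with
  | _ j ih =>
    intro s
    match j with
    | 0 => simp [cco]; ring
    | 1 => simp [cco, Finset.sum_range_succ]; ring
    | j + 2 =>
      have e1 := ih (j + 1) (by omega) s
      have e2 := ih j (by omega) (s + 2)
      have e3 : ∑ k ∈ Finset.range (j + 2 + 1),
          (cco (j + 2) k : R) * ((1 - y ^ 2) ^ k * y ^ (s + (j + 2) - k)) =
          (1 - y ^ 2) * ∑ k ∈ Finset.range (j + 1 + 1),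
            (cco (j + 1) k : R) * ((1 - y ^ 2) ^ k * y ^ (s + (j + 1) - k)) +
          ∑ k ∈ Finset.range (j + 1),
            (cco j k : R) * ((1 - y ^ 2) ^ k * y ^ (s + 2 + j - k)) := by
        have e4 : ∑ k ∈ Finset.range (j + 1),
            (cco j k : R) * ((1 - y ^ 2) ^ k * y ^ (s + 2 + j - k)) =
            ∑ k ∈ Finset.range (j + 2 + 1),
            (cco j k : R) * ((1 - y ^ 2) ^ k * y ^ (s + 2 + j - k)) := by
          rw [Finset.sum_range_succ _ (j + 2), Finset.sum_range_succ _ (j + 1),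
            cco_gt j (j + 1) (by omega), cco_gt j (j + 2) (by omega)]
          simp
        rw [e4, Finset.sum_range_succ' _ (j + 2), Finset.sum_range_succ' _ (j + 2),
          Finset.mul_sum]
        refine Eq.trans ?_ (add_assoc _ _ _)
        rw [show j + 1 + 1 = j + 2 from rfl, ← Finset.sum_add_distrib]
        congr 1
        · apply Finset.sum_congr rfl
          intro k _
          rw [show s + (j + 2) - (k + 1) = s + (j + 1) - k by omega,
            show s + 2 + j - (k + 1) = s + (j + 1) - k by omega]
          simp only [cco]
          push_cast
          ring
        · simp only [cco]
          rw [show s + (j + 2) - 0 = s + 2 + j - 0 by omega]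
      rw [e3, mul_add, mul_left_comm, ← e1, ← e2]
      ring

theorem denom {n : ℕ} {R : Type*} [CommRing R] (x : Fin n → R) :
    (Matrix.of fun j i : Fin n =>
      x i ^ (n - 1 - (j : ℕ)) + (-1 : R) ^ (j : ℕ) * x i ^ (n + 1 + (j : ℕ))).det =
    (∏ i, (1 + x i ^ 2)) * ∏ i : Fin n, ∏ j ∈ Finset.Ioi i, ((x i - x j) * (1 + x i * x j)) := by
  set C : Matrix (Fin n) (Fin n) R := Matrix.of fun j k => (cco j k : R) with hC
  have h1 : (Matrix.of fun j i : Fin n =>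
      x i ^ (n - 1 - (j : ℕ)) + (-1 : R) ^ (j : ℕ) * x i ^ (n + 1 + (j : ℕ))) =
      C * (Matrix.projVandermonde (fun i => 1 - x i ^ 2) x).transpose *
        Matrix.diagonal (fun i => 1 + x i ^ 2) := by
    ext j i
    have hj := j.2
    rw [Matrix.mul_diagonal, Matrix.mul_apply, mul_comm]
    have e := cco_sum (x i) j (n - 1 - j)
    have e2 : ∑ k ∈ Finset.range ((j : ℕ) + 1),
        (cco j k : R) * ((1 - x i ^ 2) ^ k * x i ^ (n - 1 - j + j - k)) =
        ∑ k ∈ Finset.range n,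
        (cco j k : R) * ((1 - x i ^ 2) ^ k * x i ^ (n - 1 - j + j - k)) := by
      apply Finset.sum_subset
      · intro b; simp only [Finset.mem_range]; omega
      · intro b _ hb
        rw [Finset.mem_range] at hb
        rw [cco_gt j b (by omega)]; simp
    rw [e2, ← Fin.sum_univ_eq_sum_range (fun k =>
      (cco j k : R) * ((1 - x i ^ 2) ^ k * x i ^ (n - 1 - j + j - k)))] at e
    have e5 : ∑ k, C j k * (Matrix.projVandermonde (fun i => 1 - x i ^ 2) x).transpose k i =
        ∑ k : Fin n, (cco j k : R) *
          ((1 - x i ^ 2) ^ (k : ℕ) * x i ^ (n - 1 - (j : ℕ) + j - k)) := by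
      apply Finset.sum_congr rfl
      intro k _
      have hk := k.2
      rw [Matrix.transpose_apply, Matrix.projVandermonde_apply, Fin.val_rev,
        show n - 1 - (j : ℕ) + j - k = n - (k + 1) by omega]
      rfl
    rw [e5, ← e, Matrix.of_apply,
      show n + 1 + (j : ℕ) = (n - 1 - j) + 2 * (j + 1) by omega, pow_add, pow_mul,
      neg_pow (x i ^ 2)]
    ring
  have h2 : C.det = 1 := by
    rw [Matrix.det_of_isLowerTriangular]
    · simp [hC, cco_diag]
    · intro i j hij
      have : (i : ℕ) < j := hij
      simp [hC, cco_gt _ _ this]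
  rw [h1, Matrix.det_mul, Matrix.det_mul, h2, one_mul, Matrix.det_transpose,
    Matrix.det_projVandermonde, Matrix.det_diagonal, mul_comm]
  congr 1
  apply Finset.prod_congr rfl
  intro i _
  apply Finset.prod_congr rfl
  intro j _
  ring

theorem Hsum_det_domain {n : ℕ} {R : Type*} [CommRing R] [IsDomain R] (x : Fin n → R)
    (hx : Function.Injective x) :
    (Hsum x).det = (∏ i, (1 + x i ^ 2)) * ∏ i : Fin n, ∏ j ∈ Finset.Ioi i, (1 + x i * x j) := by
  have h := congrArg Matrix.det (Hsum_mul_Mmat x)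
  rw [Matrix.det_mul, denom, det_Mmat] at h
  have hne : (∏ i : Fin n, ∏ j ∈ Finset.Ioi i, (x i - x j)) ≠ 0 := by
    rw [Finset.prod_ne_zero_iff]
    intro i _
    rw [Finset.prod_ne_zero_iff]
    intro j hj
    rw [Finset.mem_Ioi] at hj
    exact sub_ne_zero.2 (fun h => hj.ne (hx h))
  apply mul_right_cancel₀ hne
  rw [h]
  simp only [Finset.prod_mul_distrib]
  ring

theorem hpolyZ_map {n : ℕ} {R S : Type*} [CommRing R] [CommRing S] (f : R →+* S) (x : Fin n → R)
    (k : ℤ) : f (hpolyZ x k) = hpolyZ (fun i => f (x i)) k := by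
  unfold hpolyZ
  split_ifs
  · simp [hpoly, map_sum, map_prod]
  · simp

theorem Hsum_det {n : ℕ} {R : Type*} [CommRing R] (x : Fin n → R) :
    (Hsum x).det = (∏ i, (1 + x i ^ 2)) * ∏ i : Fin n, ∏ j ∈ Finset.Ioi i, (1 + x i * x j) := by
  have h := Hsum_det_domain (fun i : Fin n => (MvPolynomial.X i : MvPolynomial (Fin n) ℤ))
    (MvPolynomial.X_injective)
  let f : MvPolynomial (Fin n) ℤ →+* R := MvPolynomial.eval₂Hom (Int.castRingHom R) x
  have hf : ∀ i, f (MvPolynomial.X i) = x i := fun i => by simp [f]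
  have h' := congrArg f h
  rw [RingHom.map_det] at h'
  have hm : f.mapMatrix (Hsum (fun i : Fin n => (MvPolynomial.X i : MvPolynomial (Fin n) ℤ))) =
      Hsum x := by
    ext j k
    simp [Hsum, hpolyZ_map, hf]
  rw [hm] at h'
  rw [h']
  simp [map_prod, hf]

/-- Littlewood's identity: `∏_{i≤j}(1 + x_i x_j) = Σ_{γ ∈ 𝒞} s_γ(x)`, the sum over all
partitions whose Frobenius arm lengths exceed the leg lengths by exactly 1. -/
theorem littlewood_weak {R : Type*} [CommRing R] {n : ℕ} (hn : 1 ≤ n) (x : Fin n → R) :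
    (∏ i : Fin n, ∏ j ∈ Finset.univ.filter (fun j => i ≤ j), (1 + x i * x j)) =
      ∑ᶠ (γ : Partn) (_ : γ.InC), schur x γ := by
  rw [rhs_eq_det, Hsum_det, ← Finset.prod_mul_distrib]
  apply Finset.prod_congr rfl
  intro i _
  have : Finset.univ.filter (fun j => i ≤ j) = insert i (Finset.Ioi i) := by
    ext j
    simp [le_iff_eq_or_lt, eq_comm]
  rw [this, Finset.prod_insert (by simp), sq]
end

section
/- Let n ≥ 1 and z = (x_1,...,x_n, z_0, y_n^{-1},...,y_1^{-1}) with all parameters nonzero. Define for 1 ≤ k,ℓ ≤ n: f_{k,ℓ}(t) = (u_k t/(1 - x_k t)) · ∏_{i=k+1}^n (1 + y_i t)/(1 - x_i t) · (1 + z_0^{-1} t)/(1 - z_0 t) · ∏_{i=1}^n (1 + x_i^{-1} t)/(1 - y_i^{-1} t), with u_k = z_0 x_k ∏_{i=k+1}^n x_i y_i^{-1}, and g_{k,ℓ}(t) = (t/(1 - y_k^{-1} t)) · ∏_{i=1}^{k-1} (1 + x_i^{-1} t)/(1 - y_i^{-1} t). Set h_{k,ℓ}(q_ℓ) = f_{k,ℓ}(q_ℓ)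 + (-1)^{n-k} g_{k,ℓ}(q_ℓ). Then det_{1≤k,ℓ≤n}(h_{k,ℓ}(q_ℓ)) = Z(z)·K(z,q)·Q(q), where Z(z) = ∏_{i=1}^n x_i^{-(n-i)} · ∏_{i=1}^n (1 + z_0 x_i) · ∏_{1≤i<j≤n}(1 + x_i x_j)(1 + x_i y_j^{-1}), K(z,q) = 1/( ∏_{i=1}^n (1 - q_i z_0) · ∏_{i,j=1}^n (1 - q_j x_i)(1 - q_j y_i^{-1}) ), and Q(q) = ∏_{i=1}^n q_i · ∏_{1≤i<j≤n}(q_i - q_j) · ∏_{1≤i≤j≤n}(1 + q_i q_j). -/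
open Finset

section Helpers
open Polynomial

/-- Pair expansion of a product over `t` and its image under `t ↦ -1/t`. -/
lemma pair_expansion {K ι : Type*} [Field K] [DecidableEq ι] (a b : K) (ha : a ≠ 0)
    (d e : ι → K) (T : Finset ι) :
    ∃ α β : K[X], α.natDegree ≤ T.card + 1 ∧ β.natDegree ≤ T.card ∧
      (∀ t : K, t ≠ 0 →
        ((t + a) * (t + b) * ∏ i ∈ T, ((t + d i) * (t + e i))
            = t ^ T.card * (t * α.eval (t - t⁻¹) + β.eval (t - t⁻¹))) ∧
        ((1 - a * t) * (1 - b * t) * ∏ i ∈ T, ((1 - d i * t) * (1 - e i * t))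
            = (-t) ^ (T.card + 1) * (α.eval (t - t⁻¹) - t * β.eval (t - t⁻¹)))) ∧
      α.eval (a⁻¹ - a) = β.eval (a⁻¹ - a) * a⁻¹ ∧
      β.eval (a⁻¹ - a) = (1 + a * b) * ∏ i ∈ T, ((1 + a * d i) * (1 + a * e i)) * a⁻¹ := by
  induction T using Finset.induction_on with
  | empty =>
    refine ⟨X + C (a + b), C (1 + a * b), ?_, ?_, ?_, ?_, ?_⟩
    · simpa using (natDegree_X_add_C (a + b)).le
    · exact (natDegree_C _).le
    · intro t ht
      constructor
      · simp
        field_simp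
        ring
      · simp
        field_simp
        ring
    · simp
      field_simp
      ring
    · simp
  | insert i T hi ih =>
    obtain ⟨α, β, h1, h2, h3, h4, h5⟩ := ih
    refine ⟨α * (X + C (d i + e i)) + C (1 + d i * e i) * β,
      C (1 + d i * e i) * α + β * (C (d i + e i) - C (d i * e i) * X), ?_, ?_, ?_, ?_, ?_⟩
    · rw [card_insert_of_notMem hi]
      refine (natDegree_add_le _ _).trans (max_le ?_ ?_)
      · refine natDegree_mul_le.trans ?_
        rw [natDegree_X_add_C]; omega
      · refine natDegree_mul_le.trans ?_
        rw [natDegree_C]; omega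
    · rw [card_insert_of_notMem hi]
      refine (natDegree_add_le _ _).trans (max_le ?_ ?_)
      · refine natDegree_mul_le.trans ?_
        rw [natDegree_C]; omega
      · refine natDegree_mul_le.trans ?_
        have : (C (d i + e i) - C (d i * e i) * X).natDegree ≤ 1 := by
          refine (natDegree_sub_le _ _).trans (max_le ?_ ?_)
          · simp
          · exact natDegree_C_mul_le _ _ |>.trans natDegree_X_le
        omega
    · intro t ht
      obtain ⟨e1, e2⟩ := h3 t ht
      rw [card_insert_of_notMem hi, prod_insert hi, prod_insert hi]
      constructor
      · rw [mul_left_comm, e1]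
        simp only [eval_add, eval_mul, eval_X, eval_C, eval_sub]
        generalize α.eval (t - t⁻¹) = A
        generalize β.eval (t - t⁻¹) = B
        rw [pow_succ]
        field_simp
        ring
      · rw [mul_left_comm, e2]
        simp only [eval_add, eval_mul, eval_X, eval_C, eval_sub]
        generalize α.eval (t - t⁻¹) = A
        generalize β.eval (t - t⁻¹) = B
        rw [pow_succ (-t) (T.card + 1)]
        field_simp
        ring
    · simp only [eval_add, eval_mul, eval_X, eval_C, eval_sub]
      rw [h4]
      field_simp
      ring
    · rw [prod_insert hi]
      simp only [eval_add, eval_mul, eval_X, eval_C, eval_sub]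
      rw [h4, mul_left_comm (1 + a * b), ← h5]
      field_simp
      ring

/-- Newton expansion. -/
lemma newton_expansion {K : Type*} [Field K] (s : ℕ → K) (m : ℕ) : ∀ (k : ℕ) (p : K[X]),
    p.natDegree ≤ m →
    ∃ c : ℕ → K, c k = p.eval (s k) ∧ (∀ j < k, c j = 0) ∧
      (∏ i ∈ range k, (X - C (s i))) * p
        = ∑ j ∈ range (k + m + 1), C (c j) * ∏ i ∈ range j, (X - C (s i)) := by
  induction m with
  | zero =>
    intro k p hp
    obtain ⟨a, rfl⟩ : ∃ a, p = C a := ⟨_, eq_C_of_natDegree_le_zero hp⟩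
    refine ⟨fun j => if j = k then a else 0, by simp, ?_, ?_⟩
    · intro j hj
      simp [hj.ne]
    · rw [Finset.sum_eq_single k]
      · simp [mul_comm]
      · intro j _ hj
        simp [hj]
      · simp
  | succ m ih =>
    intro k p hp
    obtain ⟨c, hc1, hc2, hc3⟩ := ih (k + 1) (p /ₘ (X - C (s k))) (by
      rw [natDegree_divByMonic _ (monic_X_sub_C _), natDegree_X_sub_C]; omega)
    refine ⟨fun j => if j = k then p.eval (s k) else c j, by simp, ?_, ?_⟩
    · intro j hj
      simp [hj.ne, hc2 j (by omega)]
    · have hp' : p = C (p.eval (s k)) + (X - C (s k)) * (p /ₘ (X - C (s k))) := by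
        conv_lhs => rw [← modByMonic_add_div p (X - C (s k)), modByMonic_X_sub_C_eq_C_eval]
      have e1 : (∏ i ∈ range k, (X - C (s i))) * p = C (p.eval (s k)) * ∏ i ∈ range k, (X - C (s i))
          + (∏ i ∈ range (k+1), (X - C (s i))) * (p /ₘ (X - C (s k))) := by
        rw [prod_range_succ]
        conv_lhs => rw [hp']
        ring
      rw [e1, hc3, show k + (m + 1) + 1 = k + 1 + m + 1 by ring]
      have hk : k ∈ range (k + 1 + m + 1) := by simp; omega
      rw [← Finset.add_sum_erase _ _ hk, ← Finset.add_sum_erase _ _ hk, hc2 k (by omega)]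
      simp only [map_zero, zero_mul, zero_add, if_true]
      congr 1
      refine sum_congr rfl fun j hj => ?_
      simp [(mem_erase.mp hj).1]

lemma det_newton {K : Type*} [Field K] {n : ℕ} (s : ℕ → K) (v : Fin n → K) (S : Fin n → K[X])
    (hS : ∀ k, (S k).natDegree ≤ n - 1 - k) :
    Matrix.det (Matrix.of fun k l : Fin n =>
      (∏ i ∈ range k, (v l - s i)) * (S k).eval (v l))
      = (∏ k, (S k).eval (s k)) * ∏ i : Fin n, ∏ j ∈ Ioi i, (v j - v i) := by
  choose c hc1 hc2 hc3 using fun k : Fin n => newton_expansion s (n - 1 - k) k (S k) (hS k)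
  have hN : ∀ i : Fin n, (∏ i ∈ range (i : ℕ), (X - C (s i))).Monic := fun i =>
    monic_prod_of_monic _ _ fun i _ => monic_X_sub_C _
  have hd : ∀ i : Fin n, (∏ i ∈ range (i : ℕ), (X - C (s i))).natDegree = (i : ℕ) := fun i => by
    rw [natDegree_prod_of_monic _ _ fun i _ => monic_X_sub_C _]
    simp
  have hV := Matrix.det_eval_matrixOfPolynomials_eq_det_vandermonde v
    (fun i : Fin n => ∏ i ∈ range (i : ℕ), (X - C (s i))) hd hN
  rw [Matrix.det_vandermonde] at hV
  rw [hV, ← Matrix.det_transpose (Matrix.of _ : Matrix (Fin n) (Fin n) K)]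
  have hC : (∏ k, (S k).eval (s k)) = Matrix.det (Matrix.of fun k l : Fin n => c k l) := by
    rw [Matrix.det_of_isUpperTriangular]
    · simp [hc1]
    · intro i j hij
      exact hc2 i j hij
  rw [hC, ← Matrix.det_transpose (Matrix.of fun i j : Fin n => eval _ _), ← Matrix.det_mul,
    Matrix.det_transpose]
  congr 1
  ext k l
  have := congrArg (eval (v l)) (hc3 k)
  rw [show (k : ℕ) + (n - 1 - k) + 1 = n by omega] at this
  simp only [eval_mul, eval_prod, eval_sub, eval_X, eval_C, eval_finsetSum] at this
  simp only [Matrix.of_apply, Matrix.mul_apply, Matrix.transpose_apply, eval_prod, eval_sub,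
    eval_X, eval_C]
  rw [this, Finset.sum_range]

lemma prod_lt_eq_range {K : Type*} [Field K] {n : ℕ} (G : ℕ → K) (k : Fin n) :
    ∏ i ∈ univ.filter (fun i : Fin n => i < k), G i = ∏ i ∈ range k, G i := by
  refine Finset.prod_bij (fun i _ => (i : ℕ)) ?_ ?_ ?_ ?_
  · intro i hi
    simpa using hi
  · intro i _ j _ h
    exact Fin.ext h
  · intro b hb
    have hb' : b < k := by simpa using hb
    exact ⟨⟨b, hb'.trans k.2⟩, mem_filter.2 ⟨mem_univ _, Fin.lt_def.2 hb'⟩, rfl⟩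
  · intros
    rfl

lemma prod_split {K : Type*} [Field K] {n : ℕ} (G : Fin n → K) (k : Fin n) :
    ∏ i, G i = (∏ i ∈ univ.filter (fun i : Fin n => i < k), G i) * G k *
      ∏ i ∈ univ.filter (fun i : Fin n => k < i), G i := by
  rw [← Finset.prod_filter_mul_prod_filter_not univ (fun i : Fin n => i < k) G, mul_assoc]
  congr 1
  have : univ.filter (fun i : Fin n => ¬ i < k)
      = insert k (univ.filter (fun i : Fin n => k < i)) := by
    ext i
    simp only [mem_filter, mem_univ, true_and, mem_insert, not_lt, le_iff_eq_or_lt]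
    rw [eq_comm]
  rw [this, prod_insert (by simp)]

lemma entry_eq {K : Type*} [Field K] {n : ℕ}
    (x y : Fin n → K) (z0 t A B : K) (k : Fin n)
    (hx : ∀ i, x i ≠ 0) (hy : ∀ i, y i ≠ 0) (ht : t ≠ 0) (hz0 : z0 ≠ 0)
    (hxt : ∀ i, 1 - x i * t ≠ 0) (hyt : ∀ i, 1 - (y i)⁻¹ * t ≠ 0)
    (hzt : 1 - z0 * t ≠ 0)
    (e1 : (t + x k) * (t + z0) * ∏ i ∈ univ.filter (fun i => k < i), ((t + x i) * (t + (y i)⁻¹))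
      = t ^ (n - 1 - (k : ℕ)) * (t * A + B))
    (e2 : (1 - x k * t) * (1 - z0 * t) *
        ∏ i ∈ univ.filter (fun i => k < i), ((1 - x i * t) * (1 - (y i)⁻¹ * t))
      = (-t) ^ (n - 1 - (k : ℕ) + 1) * (A - t * B)) :
    (z0 * x k * ∏ i ∈ Finset.univ.filter (fun i => k < i), (x i * (y i)⁻¹)) * t / (1 - x k * t) *
        (∏ i ∈ Finset.univ.filter (fun i => k < i), ((1 + y i * t) / (1 - x i * t))) *
        ((1 + z0⁻¹ * t) / (1 - z0 * t)) *
        (∏ i : Fin n, ((1 + (x i)⁻¹ * t) / (1 - (y i)⁻¹ * t))) +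
      (-1 : K) ^ (n - 1 - (k : ℕ)) * (t / (1 - (y k)⁻¹ * t) *
        (∏ i ∈ Finset.univ.filter (fun i => i < k), ((1 + (x i)⁻¹ * t) / (1 - (y i)⁻¹ * t))))
    = (-1) ^ (k : ℕ) * (t ^ n * (1 + t ^ 2) *
        ((1 - z0 * t) * ∏ i, ((1 - x i * t) * (1 - (y i)⁻¹ * t)))⁻¹ *
      ((∏ i ∈ univ.filter (fun i => i < k), ((t - t⁻¹) - ((x i)⁻¹ - x i))) * B)) := by
  have r1 : ∀ i, 1 + (x i)⁻¹ * t = (t + x i) / x i := fun i => by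
    have := hx i
    field_simp
    ring
  have r2 : ∀ i, (t - t⁻¹) - ((x i)⁻¹ - x i) = (-1) * ((t + x i) * (1 - x i * t)) / (x i * t) :=
    fun i => by
      have := hx i
      field_simp
      ring
  have r3 : (∏ i ∈ Finset.univ.filter (fun i => k < i), (x i * (y i)⁻¹)) *
      (∏ i ∈ Finset.univ.filter (fun i => k < i), ((1 + y i * t) / (1 - x i * t)))
      = (∏ i ∈ Finset.univ.filter (fun i => k < i), x i) *
        (∏ i ∈ Finset.univ.filter (fun i => k < i), (t + (y i)⁻¹)) /
        (∏ i ∈ Finset.univ.filter (fun i => k < i), (1 - x i * t)) := by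
    rw [← prod_mul_distrib, ← prod_mul_distrib, ← prod_div_distrib]
    refine prod_congr rfl fun i _ => ?_
    have := hy i
    have := hxt i
    field_simp
    ring
  have hcard : (univ.filter (fun i : Fin n => i < k)).card = k := by
    rw [show univ.filter (fun i : Fin n => i < k) = Iio k by ext; simp, Fin.card_Iio]
  have hn' : t ^ n = t ^ (n - 1 - (k : ℕ)) * t * t ^ (k : ℕ) := by
    rw [← pow_succ, ← pow_add]
    congr 1
    omega
  have hs : ((-1 : K) ^ (n - 1 - (k : ℕ))) * (-t) ^ (n - 1 - (k : ℕ) + 1)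
      = - (t ^ (n - 1 - (k : ℕ)) * t) := by
    rw [pow_succ, ← mul_assoc, ← mul_pow]
    ring
  have hk1 : ((-1 : K) ^ (k : ℕ)) * (-1) ^ (k : ℕ) = 1 := by
    rw [← mul_pow]; simp
  have key : (-1 : K) ^ (n - 1 - (k : ℕ)) * ((1 - x k * t) * (1 - z0 * t) *
        ∏ i ∈ univ.filter (fun i => k < i), ((1 - x i * t) * (1 - (y i)⁻¹ * t)))
      + (t + x k) * (t + z0) * ∏ i ∈ univ.filter (fun i => k < i), ((t + x i) * (t + (y i)⁻¹))
      = t ^ (n - 1 - (k : ℕ)) * (1 + t ^ 2) * B := by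
    rw [e1, e2, ← mul_assoc, hs]
    ring
  clear e1 e2 hs
  have r4 : 1 + z0⁻¹ * t = (t + z0) / z0 := by
    field_simp
    ring
  rw [prod_split (fun i => (1 + (x i)⁻¹ * t) / (1 - (y i)⁻¹ * t)) k,
    prod_split (fun i => ((1 - x i * t) * (1 - (y i)⁻¹ * t))) k, hn', r4]
  rw [show ∀ a b c d e f g : K, a * b * c * t / d * e * f * g = a * b * t / d * (c * e) * f * g by
    intros; ring, r3]
  simp only [r1, r2, prod_div_distrib, prod_mul_distrib, prod_const, hcard] at key ⊢
  have n1 : ∏ i ∈ univ.filter (fun i => i < k), x i ≠ 0 := prod_ne_zero_iff.2 fun i _ => hx i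
  have n2 : ∏ i ∈ univ.filter (fun i => k < i), x i ≠ 0 := prod_ne_zero_iff.2 fun i _ => hx i
  have n3 : ∏ i ∈ univ.filter (fun i => i < k), (1 - x i * t) ≠ 0 :=
    prod_ne_zero_iff.2 fun i _ => hxt i
  have n4 : ∏ i ∈ univ.filter (fun i => k < i), (1 - x i * t) ≠ 0 :=
    prod_ne_zero_iff.2 fun i _ => hxt i
  have n5 : ∏ i ∈ univ.filter (fun i => i < k), (1 - (y i)⁻¹ * t) ≠ 0 :=
    prod_ne_zero_iff.2 fun i _ => hyt i
  have n6 : ∏ i ∈ univ.filter (fun i => k < i), (1 - (y i)⁻¹ * t) ≠ 0 :=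
    prod_ne_zero_iff.2 fun i _ => hyt i
  have n7 := hx k
  have n8 := hxt k
  have n9 := hyt k
  have n10 : t ^ (k : ℕ) ≠ 0 := pow_ne_zero _ ht
  generalize (∏ i ∈ univ.filter (fun i => i < k), x i) = Xl at *
  generalize (∏ i ∈ univ.filter (fun i => k < i), x i) = Xg at *
  generalize (∏ i ∈ univ.filter (fun i => i < k), (1 - x i * t)) = Ml at *
  generalize (∏ i ∈ univ.filter (fun i => k < i), (1 - x i * t)) = Mg at *
  generalize (∏ i ∈ univ.filter (fun i => i < k), (1 - (y i)⁻¹ * t)) = Wl at *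
  generalize (∏ i ∈ univ.filter (fun i => k < i), (1 - (y i)⁻¹ * t)) = Wg at *
  generalize (∏ i ∈ univ.filter (fun i => i < k), (t + x i)) = Pl at *
  generalize (∏ i ∈ univ.filter (fun i => k < i), (t + x i)) = Pg at *
  generalize (∏ i ∈ univ.filter (fun i => k < i), (t + (y i)⁻¹)) = Vg at *
  generalize 1 - (y k)⁻¹ * t = wk at *
  generalize 1 - x k * t = mk at *
  generalize 1 - z0 * t = mz at *
  generalize t ^ (k : ℕ) = tk at *
  generalize (-1 : K) ^ (k : ℕ) = sk at *
  generalize (-1 : K) ^ (n - 1 - (k : ℕ)) = sm at *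
  generalize t ^ (n - 1 - (k : ℕ)) = tm at *
  generalize x k = xk at *
  trans (t * Pl * Ml / Xl / (mz * (Ml * Wl * (mk * wk) * (Mg * Wg)))) *
    (sm * (mk * mz * (Mg * Wg)) + (t + xk) * (t + z0) * (Pg * Vg))
  · field_simp
    ring
  · rw [key]
    field_simp
    linear_combination (-Pl * tm * B * (1 + t ^ 2)) * hk1

lemma q_prod {K : Type*} [Field K] {n : ℕ} (q : Fin n → K) (hq : ∀ i, q i ≠ 0) :
    (∏ k : Fin n, (-1 : K) ^ (k : ℕ)) * (∏ l, (q l) ^ n) *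
      ∏ i : Fin n, ∏ j ∈ Ioi i, ((q j - (q j)⁻¹) - (q i - (q i)⁻¹))
    = (∏ i, q i) * ∏ i : Fin n, ∏ j ∈ Ioi i, ((q i - q j) * (1 + q i * q j)) := by
  have r : ∀ i j, (q j - (q j)⁻¹) - (q i - (q i)⁻¹)
      = ((q i - q j) * (1 + q i * q j)) * ((-1 * (q j)⁻¹) * (q i)⁻¹) := fun i j => by
    have := hq i
    have := hq j
    field_simp
    ring
  have r2 : ∏ i : Fin n, ∏ j ∈ Ioi i, (-1 * (q j)⁻¹) = ∏ j : Fin n, (-1 * (q j)⁻¹) ^ (j : ℕ) := by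
    rw [Finset.prod_comm' (t' := univ) (s' := fun j => Iio j) (by simp)]
    simp
  simp only [r]
  simp only [prod_mul_distrib (f := fun j => (q _ - q j) * (1 + q _ * q j))]
  simp only [prod_mul_distrib (f := fun i => ∏ j ∈ Ioi i, ((q i - q j) * (1 + q i * q j)))]
  rw [mul_left_comm, mul_comm (∏ i, q i)]
  congr 1
  simp only [prod_mul_distrib (f := fun j => -1 * (q j)⁻¹)]
  simp only [prod_mul_distrib (f := fun i => ∏ j ∈ Ioi i, (-1 * (q j)⁻¹))]
  rw [r2]
  simp only [prod_const, Fin.card_Ioi]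
  simp only [← prod_mul_distrib]
  refine prod_congr rfl fun i _ => ?_
  have h := hq i
  have hn : q i ^ n = q i ^ (i : ℕ) * q i ^ (n - 1 - (i : ℕ)) * q i := by
    rw [← pow_add, ← pow_succ]
    congr 1
    omega
  rw [hn, mul_pow, inv_pow, inv_pow]
  have hk1 : ((-1 : K) ^ (i : ℕ)) * (-1) ^ (i : ℕ) = 1 := by
    rw [← mul_pow]; simp
  have := pow_ne_zero (i : ℕ) h
  have := pow_ne_zero (n - 1 - (i : ℕ)) h
  generalize (-1 : K) ^ (i : ℕ) = sk at *
  generalize q i ^ (i : ℕ) = a at *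
  generalize q i ^ (n - 1 - (i : ℕ)) = b at *
  field_simp
  linear_combination hk1

end Helpers


/-- Theorem 6.1 / Lemma 6.2 combined: `det(h_{k,ℓ}(q_ℓ)) = Z(z) K(z,q) Q(q)` with
`h_{k,ℓ} = f_{k,ℓ} + (-1)^{n-k} g_{k,ℓ}`.  Indices are 0-indexed: `k : Fin n` has
1-indexed value `k+1`, so `∏_{i=k+1}^n` becomes a product over `k < i`,
`∏_{i=1}^{k-1}` over `i < k`, the sign `(-1)^{n-k}` becomes `(-1)^{n-1-k}`, and
`x_i^{-(n-i)}` becomes `(x i)⁻¹ ^ (n-1-i)`.  The hypotheses make every denominator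
appearing on either side nonzero. -/
theorem det_h_eq_ZKQ {K : Type*} [Field K] {n : ℕ} (hn : 1 ≤ n)
    (x y q : Fin n → K) (z0 : K)
    (hx : ∀ i, x i ≠ 0) (hy : ∀ i, y i ≠ 0) (hq : ∀ i, q i ≠ 0) (hz0 : z0 ≠ 0)
    (hxq : ∀ i j, 1 - x i * q j ≠ 0) (hyq : ∀ i j, 1 - (y i)⁻¹ * q j ≠ 0)
    (hzq : ∀ j, 1 - z0 * q j ≠ 0) :
    let u : Fin n → K := fun k =>
      z0 * x k * ∏ i ∈ Finset.univ.filter (fun i => k < i), (x i * (y i)⁻¹)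
    let f : Fin n → K → K := fun k t =>
      u k * t / (1 - x k * t) *
        (∏ i ∈ Finset.univ.filter (fun i => k < i), ((1 + y i * t) / (1 - x i * t))) *
        ((1 + z0⁻¹ * t) / (1 - z0 * t)) *
        (∏ i : Fin n, ((1 + (x i)⁻¹ * t) / (1 - (y i)⁻¹ * t)))
    let g : Fin n → K → K := fun k t =>
      t / (1 - (y k)⁻¹ * t) *
        (∏ i ∈ Finset.univ.filter (fun i => i < k), ((1 + (x i)⁻¹ * t) / (1 - (y i)⁻¹ * t)))
    Matrix.det (Matrix.of fun k l : Fin n =>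
        f k (q l) + (-1 : K) ^ (n - 1 - (k : ℕ)) * g k (q l)) =
      ((∏ i : Fin n, (x i)⁻¹ ^ (n - 1 - (i : ℕ))) *
        (∏ i : Fin n, (1 + z0 * x i)) *
        (∏ i : Fin n, ∏ j ∈ Finset.univ.filter (fun j => i < j),
          ((1 + x i * x j) * (1 + x i * (y j)⁻¹)))) *
      ((∏ i : Fin n, (1 - q i * z0)) *
        ∏ i : Fin n, ∏ j : Fin n, ((1 - q j * x i) * (1 - q j * (y i)⁻¹)))⁻¹ *
      ((∏ i : Fin n, q i) *
        (∏ i : Fin n, ∏ j ∈ Finset.univ.filter (fun j => i < j), (q i - q j)) *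
        (∏ i : Fin n, ∏ j ∈ Finset.univ.filter (fun j => i ≤ j), (1 + q i * q j))) := by
  intro u f g
  have hIoi : ∀ i : Fin n, univ.filter (fun j => i < j) = Ioi i := fun i => by ext; simp
  have hIci : ∀ i : Fin n, univ.filter (fun j => i ≤ j) = insert i (Ioi i) := fun i => by
    ext j; simp [le_iff_eq_or_lt, @eq_comm _ i]
  have hcard : ∀ k : Fin n, (univ.filter (fun j => k < j)).card = n - 1 - (k : ℕ) := fun k => by
    rw [hIoi, Fin.card_Ioi]
  choose α β _ hβ hE _ hv using fun k : Fin n => pair_expansion (x k) z0 (hx k) x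
    (fun i => (y i)⁻¹) (univ.filter (fun j => k < j))
  simp only [hcard] at hβ hE
  let s : ℕ → K := fun i => if h : i < n then (x ⟨i, h⟩)⁻¹ - x ⟨i, h⟩ else 0
  have hs : ∀ i : Fin n, s i = (x i)⁻¹ - x i := fun i => by simp [s]
  have hM : (Matrix.of fun k l : Fin n =>
        f k (q l) + (-1 : K) ^ (n - 1 - (k : ℕ)) * g k (q l))
      = Matrix.of fun k l : Fin n => (-1 : K) ^ (k : ℕ) *
        (Matrix.of fun k l : Fin n => ((q l) ^ n * (1 + (q l) ^ 2) *
          ((1 - z0 * q l) * ∏ i, ((1 - x i * q l) * (1 - (y i)⁻¹ * q l)))⁻¹) *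
        (Matrix.of fun k l : Fin n =>
          (∏ i ∈ range k, ((q l - (q l)⁻¹) - s i)) * (β k).eval (q l - (q l)⁻¹)) k l) k l := by
    ext k l
    obtain ⟨e1, e2⟩ := hE k (q l) (hq l)
    have := entry_eq x y z0 (q l) _ _ k hx hy (hq l) hz0 (fun i => hxq i l) (fun i => hyq i l)
      (hzq l) e1 e2
    simp only [Matrix.of_apply]
    rw [← prod_lt_eq_range (fun i => (q l - (q l)⁻¹) - s i) k]
    simp only [hs]
    exact this
  rw [hM, Matrix.det_mul_column, Matrix.det_mul_row,
    det_newton s (fun l => q l - (q l)⁻¹) β hβ]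
  simp only [hs, hv, hIoi, hIci]
  have hnot : ∀ i : Fin n, i ∉ Ioi i := fun i => by simp
  have hQ := q_prod q hq
  simp only [prod_insert (hnot _), prod_mul_distrib, prod_inv_distrib,
    prod_const, Fin.card_Ioi] at hQ ⊢
  have c1 : ∏ i, ∏ j, (1 - q j * x i) = ∏ j, ∏ i, (1 - x i * q j) := by
    rw [prod_comm]
    simp only [mul_comm]
  have c2 : ∏ i, ∏ j, (1 - q j * (y i)⁻¹) = ∏ j, ∏ i, (1 - (y i)⁻¹ * q j) := by
    rw [prod_comm]
    simp only [mul_comm]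
  have c3 : ∏ i, (1 - q i * z0) = ∏ i, (1 - z0 * q i) := by simp only [mul_comm]
  have c4 : ∏ i, (1 + z0 * x i) = ∏ i, (1 + x i * z0) := by simp only [mul_comm]
  rw [c1, c2, c3, c4]
  simp only [inv_pow, prod_inv_distrib, ← pow_two]
  generalize ((∏ x, (1 - z0 * q x)) * ((∏ x_1, ∏ x_2, (1 - x x_2 * q x_1)) *
    ∏ x, ∏ x_1, (1 - (y x_1)⁻¹ * q x)))⁻¹ = D
  generalize (∏ x_1, x x_1 ^ (n - 1 - (x_1 : ℕ)))⁻¹ = E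
  linear_combination ((∏ i, (1 + q i ^ 2)) * D * (∏ i, (1 + x i * z0)) *
    ((∏ i, ∏ j ∈ Ioi i, (1 + x i * x j)) * ∏ i, ∏ j ∈ Ioi i, (1 + x i * (y j)⁻¹)) * E) * hQ
end
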